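/- arXiv:math/0510601 — 7 statements merged into one kernel-verified Lean document; each statement's English description precedes it below -/
import Mathlib

section
/- Let X be a Polish space and d a lower semicontinuous metric on X such that ∫ e^{a_o d(x_o,x)} μ(dx) < ∞ for some a_o > 0 and some point x_o ∈ X, where μ is a Borel probability measure on X. Let α be in the class C. Then α(T_d(μ,ν)) ≤ H(ν|μ) holds for every Borel probability measure ν on X with ∫ d(x_o,x) ν(dx) < ∞ if and only if log ∫ exp[s(φ(x) − ∫ φ dμ)] μ(dx) ≤ α^⊛(s) for all s ≥ 0 and all bounded measurable functions φ that are 1-Lipschitz with respect to d. -/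
open MeasureTheory ENNReal Set
open scoped NNReal ENNReal

noncomputable section

/-- The class 𝒞 of convex, nondecreasing, left continuous functions vanishing at 0,
extended to `ℝ≥0∞` (left continuity at `∞` encodes the convention `α ∞ = lim α`). -/
def ClassCFun (α : ℝ≥0∞ → ℝ≥0∞) : Prop :=
  Monotone α ∧ α 0 = 0 ∧
    (∀ (s t : ℝ≥0∞) (p q : ℝ≥0), p + q = 1 →
      α ((p : ℝ≥0∞) * s + (q : ℝ≥0∞) * t) ≤ (p : ℝ≥0∞) * α s + (q : ℝ≥0∞) * α t) ∧
    ∀ x : ℝ≥0∞, x ≠ 0 → α x = ⨆ y ∈ Set.Iio x, α y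

open scoped Classical in
/-- Relative entropy `H(ν|μ)`. -/
def relEntropy {X : Type*} [MeasurableSpace X] (ν μ : Measure X) : ℝ≥0∞ :=
  if ν ≪ μ ∧ Integrable (fun x => Real.log (ν.rnDeriv μ x).toReal) ν
  then ENNReal.ofReal (∫ x, Real.log (ν.rnDeriv μ x).toReal ∂ν) else ⊤

/-- Optimal transportation cost for the cost function `c`. -/
def optTransportCost {X : Type*} [MeasurableSpace X] (c : X → X → ℝ)
    (μ ν : Measure X) : ℝ≥0∞ :=
  ⨅ (π : Measure (X × X)) (_ : π.map Prod.fst = μ ∧ π.map Prod.snd = ν),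
    ∫⁻ p, ENNReal.ofReal (c p.1 p.2) ∂π

/-- Monotone conjugate `α^⊛(s) = sup_{t ≥ 0} (s t − α t)`. -/
def monoConj (α : ℝ≥0∞ → ℝ≥0∞) (s : ℝ≥0∞) : ℝ≥0∞ :=
  ⨆ t : ℝ≥0, s * (t : ℝ≥0∞) - α (t : ℝ≥0∞)

theorem aux_abs_clamp (C a b : ℝ) :
    |max (-C) (min C a) - max (-C) (min C b)| ≤ |a - b| :=
  (abs_max_sub_max_le_max _ _ _ _).trans (by
    rw [sub_self, abs_zero]
    refine max_le (abs_nonneg _) ((abs_min_sub_min_le_max _ _ _ _).trans ?_)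
    rw [sub_self, abs_zero]
    exact max_le (abs_nonneg _) le_rfl)

theorem aux_dual_le {X : Type*} [TopologicalSpace X] [PolishSpace X] [MeasurableSpace X]
    [BorelSpace X] (d : X → X → ℝ)
    (hd_symm : ∀ x y, d x y = d y x)
    (hd_tri : ∀ x y z, d x z ≤ d x y + d y z)
    (hd_self : ∀ x, d x x = 0)
    (hd_lsc : LowerSemicontinuous fun p : X × X => d p.1 p.2)
    (μ ν : Measure X) [IsProbabilityMeasure μ] [IsProbabilityMeasure ν] (x₀ : X) (V : ℝ)
    (hV : ∀ φ : X → ℝ, Measurable φ → (∃ C : ℝ, ∀ x, |φ x| ≤ C) →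
        (∀ x y, |φ x - φ y| ≤ d x y) → ∫ x, φ x ∂μ - ∫ x, φ x ∂ν ≤ V)
    (u v : X → ℝ) (hu : Continuous u) (hv : Continuous v) (C : ℝ)
    (huC : ∀ x, |u x| ≤ C) (hvC : ∀ x, |v x| ≤ C) (huv : ∀ x y, u x + v y ≤ d x y) :
    ∫ x, u x ∂μ + ∫ x, v x ∂ν ≤ V := by
  have hC : 0 ≤ C := (abs_nonneg _).trans (huC x₀)
  have bdd_int : ∀ (ρ : Measure X) [IsProbabilityMeasure ρ] (f : X → ℝ), Measurable f →
      (∀ x, |f x| ≤ C) → Integrable f ρ := fun ρ _ f hf hb =>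
    Integrable.of_bound hf.aestronglyMeasurable C (Filter.Eventually.of_forall hb)
  refine le_of_forall_pos_le_add fun ε hε => ?_
  obtain ⟨K₀, -, hK₀c, hK₀⟩ := MeasurableSet.exists_isCompact_lt_add (μ := ν)
    (MeasurableSet.univ) (measure_ne_top _ _) (ε := ENNReal.ofReal (ε / (2 * C + 1)))
    (by simp; positivity)
  set K := K₀ ∪ {x₀} with hKdef
  have hKc : IsCompact K := hK₀c.union isCompact_singleton
  have hKne : K.Nonempty := ⟨x₀, by simp [hKdef]⟩
  have hKm : MeasurableSet K := hKc.measurableSet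
  have hνK : ν.real Kᶜ ≤ ε / (2 * C + 1) := by
    rw [probReal_compl_eq_one_sub hKm]
    have h1 : (1 : ℝ≥0∞) ≤ ν K + ENNReal.ofReal (ε / (2 * C + 1)) := by
      rw [measure_univ] at hK₀
      exact hK₀.le.trans (by gcongr; exact subset_union_left)
    have h2 := ENNReal.toReal_mono (by simp) h1
    rw [ENNReal.toReal_add (by simp) (by simp), ENNReal.toReal_ofReal (by positivity)] at h2
    simp only [ENNReal.toReal_one] at h2
    rw [Measure.real]; linarith
  have hlsc : LowerSemicontinuous fun p : X × X => d p.1 p.2 - v p.2 := by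
    have : LowerSemicontinuous fun p : X × X => - v p.2 :=
      (Continuous.neg (hv.comp continuous_snd)).lowerSemicontinuous
    simpa [sub_eq_add_neg] using hd_lsc.add this
  have hmin : ∀ x, ∃ y ∈ K, IsMinOn (fun y => d x y - v y) K y := fun x =>
    LowerSemicontinuousOn.exists_isMinOn hKne hKc
      ((hlsc.comp (Continuous.prodMk_right x)).lowerSemicontinuousOn K)
  choose m hmK hm using hmin
  set φ₀ : X → ℝ := fun x => d x (m x) - v (m x) with hφ₀
  have hφ₀le : ∀ x, ∀ y ∈ K, φ₀ x ≤ d x y - v y := fun x y hy => hm x hy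
  have hφ₀lsc : LowerSemicontinuous φ₀ := by
    rw [lowerSemicontinuous_iff_isClosed_preimage]
    intro a
    have : CompactSpace K := isCompact_iff_compactSpace.mp hKc
    have hcl : IsClosed {p : X × K | d p.1 p.2 - v p.2 ≤ a} := by
      have h1 : LowerSemicontinuous fun p : X × K => d p.1 p.2 - v p.2 :=
        hlsc.comp (continuous_fst.prodMk (continuous_subtype_val.comp continuous_snd))
      exact lowerSemicontinuous_iff_isClosed_preimage.mp h1 a
    have := isClosedMap_fst_of_compactSpace _ hcl
    convert this using 1
    ext x
    simp only [mem_preimage, mem_Iic, mem_image, mem_ofPred_eq, Prod.exists, exists_and_right,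
      exists_eq_right]
    constructor
    · intro h
      exact ⟨⟨m x, hmK x⟩, h⟩
    · rintro ⟨y, hy⟩
      exact (hφ₀le x y y.2).trans hy
  have hφ₀lip1 : ∀ x y, φ₀ x - φ₀ y ≤ d x y := by
    intro x y
    have h1 := hφ₀le x (m y) (hmK y)
    have h2 := hd_tri x y (m y)
    simp only [hφ₀] at h1 ⊢
    linarith
  have hφ₀lip : ∀ x y, |φ₀ x - φ₀ y| ≤ d x y := fun x y =>
    abs_le.mpr ⟨by have := hφ₀lip1 y x; rw [hd_symm] at this; linarith, hφ₀lip1 x y⟩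
  set φ : X → ℝ := fun x => max (-C) (min C (φ₀ x)) with hφ
  have hφm : Measurable φ := measurable_const.max (measurable_const.min hφ₀lsc.measurable)
  have hφC : ∀ x, |φ x| ≤ C := fun x =>
    abs_le.mpr ⟨le_max_left _ _, max_le (by linarith) (min_le_left _ _)⟩
  have hVφ := hV φ hφm ⟨C, hφC⟩ fun x y => (aux_abs_clamp C _ _).trans (hφ₀lip x y)
  have hφu : ∀ x, u x ≤ φ x := by
    intro x
    refine le_max_of_le_right (le_min (abs_le.mp (huC x)).2 ?_)
    have := huv x (m x)
    simp only [hφ₀]; linarith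
  have hφv : ∀ x ∈ K, v x ≤ - φ x := by
    intro x hx
    have h1 := hφ₀le x x hx
    rw [hd_self] at h1
    have : φ x ≤ - v x := max_le (by have := (abs_le.mp (hvC x)).2; linarith)
      ((min_le_right _ _).trans (by linarith))
    linarith
  have i1 : ∫ x, u x ∂μ ≤ ∫ x, φ x ∂μ :=
    integral_mono (bdd_int μ u hu.measurable huC) (bdd_int μ φ hφm hφC) hφu
  have i2 : ∫ x, v x ∂ν ≤ ∫ x, (- φ x + Kᶜ.indicator (fun _ => 2 * C) x) ∂ν := by
    refine integral_mono (bdd_int ν v hv.measurable hvC) ((bdd_int ν φ hφm hφC).neg.add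
      ((integrable_const _).indicator hKm.compl)) fun x => ?_
    by_cases hx : x ∈ K
    · simpa [hx] using hφv x hx
    · have h1 := (abs_le.mp (hvC x)).2
      have h2 := (abs_le.mp (hφC x)).2
      simp only [mem_compl_iff, hx, not_false_eq_true, indicator_of_mem]
      linarith
  rw [integral_add (f := fun x => - φ x) (bdd_int ν φ hφm hφC).neg ((integrable_const _).indicator hKm.compl),
    integral_neg, integral_indicator_const _ hKm.compl, smul_eq_mul] at i2
  have i3 : ν.real Kᶜ * (2 * C) ≤ ε := by
    calc ν.real Kᶜ * (2 * C) ≤ ε / (2 * C + 1) * (2 * C + 1) := by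
          gcongr; linarith
      _ = ε := by field_simp
  linarith

theorem aux_functional {X Y : Type*} [MeasurableSpace X]
    [TopologicalSpace Y] [CompactSpace Y] [MeasurableSpace Y] [BorelSpace Y]
    (i : X → Y) (hi : Measurable i) (d : X → X → ℝ)
    (μ ν : Measure X) [IsProbabilityMeasure μ] [IsProbabilityMeasure ν] (V : ℝ)
    (hdual : ∀ (u v : C(Y, ℝ)) (t : ℝ), 0 ≤ t → (∀ x y, 0 ≤ u (i x) + v (i y) + t * d x y) →
      0 ≤ ∫ x, u (i x) ∂μ + ∫ x, v (i x) ∂ν + t * V) :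
    ∃ Λ : CompactlySupportedContinuousMap (Y × Y) ℝ →ₗ[ℝ] ℝ,
      ∀ (f : CompactlySupportedContinuousMap (Y × Y) ℝ) (u v : C(Y, ℝ)) (t : ℝ), 0 ≤ t →
      (∀ x y, f (i x, i y) ≤ u (i x) + v (i y) + t * d x y) →
      Λ f ≤ ∫ x, u (i x) ∂μ + ∫ x, v (i x) ∂ν + t * V := by
  have hint : ∀ (ρ : Measure X) [IsProbabilityMeasure ρ] (u : C(Y, ℝ)),
      Integrable (fun x => u (i x)) ρ := fun ρ _ u =>
    Integrable.of_bound (u.continuous.measurable.comp hi).aestronglyMeasurable ‖u‖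
      (Filter.Eventually.of_forall fun x => u.norm_coe_le_norm _)
  let s : PointedCone ℝ (CompactlySupportedContinuousMap (Y × Y) ℝ × ℝ) :=
    { carrier := {p | ∃ (u v : C(Y, ℝ)) (t : ℝ), 0 ≤ t ∧
        (∀ x y, p.1 (i x, i y) ≤ u (i x) + v (i y) + t * d x y) ∧
        ∫ x, u (i x) ∂μ + ∫ x, v (i x) ∂ν + t * V ≤ p.2}
      add_mem' := by
        rintro p q ⟨u, v, t, ht, h1, h2⟩ ⟨u', v', t', ht', h1', h2'⟩
        refine ⟨u + u', v + v', t + t', add_nonneg ht ht', fun x y => ?_, ?_⟩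
        · have := h1 x y
          have := h1' x y
          simp only [Prod.fst_add, CompactlySupportedContinuousMap.coe_add, Pi.add_apply,
            ContinuousMap.coe_add]
          linarith
        · simp only [ContinuousMap.coe_add, Pi.add_apply, Prod.snd_add]
          rw [integral_add (hint _ _) (hint _ _), integral_add (hint _ _) (hint _ _)]
          linarith
      zero_mem' := ⟨0, 0, 0, le_rfl, by simp, by simp⟩
      smul_mem' := by
        rintro c p ⟨u, v, t, ht, h1, h2⟩
        refine ⟨(c : ℝ) • u, (c : ℝ) • v, c * t, mul_nonneg c.2 ht, fun x y => ?_, ?_⟩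
        · have := mul_le_mul_of_nonneg_left (h1 x y) c.2
          simp only [Prod.smul_fst, CompactlySupportedContinuousMap.coe_smul,
            Pi.smul_apply, ContinuousMap.coe_smul, smul_eq_mul] at this ⊢
          calc _ ≤ _ := this
            _ = _ := by change (c : ℝ) * _ = _; ring
        · have := mul_le_mul_of_nonneg_left h2 c.2
          simp only [Prod.smul_snd,
            Pi.smul_apply, ContinuousMap.coe_smul, smul_eq_mul, integral_const_mul] at this ⊢
          calc _ = _ := ?_
            _ ≤ _ := this
          change _ = (c : ℝ) * _; ring }
  let D : Submodule ℝ (CompactlySupportedContinuousMap (Y × Y) ℝ × ℝ) := Submodule.prod ⊥ ⊤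
  let F : (CompactlySupportedContinuousMap (Y × Y) ℝ × ℝ) →ₗ.[ℝ] ℝ :=
    { domain := D
      toFun := (LinearMap.snd ℝ _ ℝ).domRestrict D }
  obtain ⟨g, hg1, hg2⟩ := riesz_extension s F (by
      rintro ⟨⟨f, r⟩, hfr⟩ ⟨u, v, t, ht, h1, h2⟩
      have hf : f = 0 := by
        have := (Submodule.mem_prod.mp hfr).1
        simpa using this
      subst hf
      refine (hdual u v t ht fun x y => ?_).trans h2
      simpa using h1 x y) (by
      rintro ⟨f, r⟩
      let f' : C(Y × Y, ℝ) := f.toContinuousMap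
      refine ⟨⟨(0, ‖f'‖ - r), Submodule.mem_prod.mpr ⟨by simp, by simp⟩⟩,
        ContinuousMap.const _ ‖f'‖, 0, 0, le_rfl, fun x y => ?_, ?_⟩
      · have := (le_abs_self _).trans (f'.norm_coe_le_norm (i x, i y))
        simp only [zero_add, Prod.fst_add, ContinuousMap.const_apply, ContinuousMap.zero_apply,
          add_zero, zero_mul]
        exact this
      · simp)
  have hgr : ∀ r : ℝ, g (0, r) = r := fun r =>
    hg1 ⟨(0, r), Submodule.mem_prod.mpr ⟨by simp, by simp⟩⟩
  refine ⟨- g.comp (LinearMap.inl ℝ _ ℝ), fun f u v t ht h => ?_⟩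
  have h0 := hg2 (f, ∫ x, u (i x) ∂μ + ∫ x, v (i x) ∂ν + t * V) ⟨u, v, t, ht, h, le_rfl⟩
  have h1 : (f, ∫ x, u (i x) ∂μ + ∫ x, v (i x) ∂ν + t * V)
    = (f, (0 : ℝ)) + (0, ∫ x, u (i x) ∂μ + ∫ x, v (i x) ∂ν + t * V) := by simp
  rw [h1, map_add, hgr] at h0
  simp only [LinearMap.neg_apply, LinearMap.comp_apply, LinearMap.inl_apply]
  linarith

theorem aux_approx {W Z : Type*} [TopologicalSpace W] [Nonempty W] [TopologicalSpace Z]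
    [TopologicalSpace.MetrizableSpace Z]
    (j : W → Z) (hj : Topology.IsEmbedding j) (c : W → ℝ) (hc0 : ∀ w, 0 ≤ c w)
    (hc : LowerSemicontinuous c) :
    ∃ f : ℕ → C(Z, ℝ), (∀ n z, 0 ≤ f n z) ∧ (∀ n w, f n (j w) ≤ c w) ∧
      ∀ w a, a < c w → ∀ᶠ n in Filter.atTop, a ≤ f n (j w) := by
  letI : MetricSpace Z := TopologicalSpace.metrizableSpaceMetric Z
  have bdd : ∀ (n : ℕ) z, BddBelow (range fun w => c w + n * dist z (j w)) := fun n z =>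
    ⟨0, by rintro _ ⟨w, rfl⟩; have := hc0 w; positivity⟩
  have hlip : ∀ n : ℕ, LipschitzWith n (fun z => ⨅ w, (c w + n * dist z (j w))) := by
    intro n
    refine LipschitzWith.of_le_add_mul n fun x y => ?_
    rw [← sub_le_iff_le_add]
    refine le_ciInf fun w => ?_
    rw [sub_le_iff_le_add]
    refine (ciInf_le (bdd n x) w).trans ?_
    have h1 : (n : ℝ) * dist x (j w) ≤ n * (dist x y + dist y (j w)) := by
      gcongr; exact dist_triangle _ _ _
    have h2 : ((n : ℝ≥0) : ℝ) = n := by simp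
    rw [h2]
    linarith
  refine ⟨fun n => ⟨_, (hlip n).continuous⟩, fun n z => ?_, fun n w => ?_, fun w a haw => ?_⟩
  · exact le_ciInf fun w => by have := hc0 w; positivity
  · refine (ciInf_le (bdd n (j w)) w).trans ?_
    simp
  · have h1 := hc w a haw
    rw [hj.nhds_eq_comap, Filter.eventually_comap] at h1
    obtain ⟨r, hr, h2⟩ := Metric.eventually_nhds_iff.mp h1
    obtain ⟨N, hN⟩ := exists_nat_ge (a / r)
    filter_upwards [Filter.eventually_ge_atTop N] with n hn
    refine le_ciInf fun w' => ?_
    by_cases hw : dist (j w') (j w) < r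
    · have h3 := h2 hw w' rfl
      have : 0 ≤ (n : ℝ) * dist (j w) (j w') := by positivity
      linarith
    · push Not at hw
      have h4 : a ≤ n * r := by
        rw [div_le_iff₀ hr] at hN
        refine hN.trans ?_
        gcongr
      have h5 : (n : ℝ) * r ≤ n * dist (j w) (j w') := by
        rw [dist_comm (j w)]
        gcongr
      have := hc0 w'
      linarith

theorem aux_KR' {X Y : Type*} [TopologicalSpace X] [PolishSpace X] [MeasurableSpace X]
    [BorelSpace X] [TopologicalSpace Y] [CompactSpace Y] [T2Space Y]
    [TopologicalSpace.MetrizableSpace Y] [SecondCountableTopology Y]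
    [MeasurableSpace Y] [BorelSpace Y] (i : X → Y) (hi : Topology.IsEmbedding i) (d : X → X → ℝ)
    (hd_symm : ∀ x y, d x y = d y x)
    (hd_tri : ∀ x y z, d x z ≤ d x y + d y z)
    (hd_self : ∀ x, d x x = 0)
    (hd_nonneg : ∀ x y, 0 ≤ d x y)
    (hd_lsc : LowerSemicontinuous fun p : X × X => d p.1 p.2)
    (μ ν : Measure X) [IsProbabilityMeasure μ] [IsProbabilityMeasure ν] (x₀ : X) (V : ℝ)
    (hV : ∀ φ : X → ℝ, Measurable φ → (∃ C : ℝ, ∀ x, |φ x| ≤ C) →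
        (∀ x y, |φ x - φ y| ≤ d x y) → ∫ x, φ x ∂μ - ∫ x, φ x ∂ν ≤ V) :
    optTransportCost d μ ν ≤ ENNReal.ofReal V := by
  have hV0 : 0 ≤ V := by
    simpa using hV (fun _ => 0) measurable_const ⟨0, by simp⟩ (by simpa using hd_nonneg)
  have him : MeasurableEmbedding i := hi.continuous.measurableEmbedding hi.injective
  -- the dual inequality
  have hpos : ∀ (u v : C(Y, ℝ)) (t : ℝ), 0 < t → (∀ x y, 0 ≤ u (i x) + v (i y) + t * d x y) →
      0 ≤ ∫ x, u (i x) ∂μ + ∫ x, v (i x) ∂ν + t * V := by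
    intro u v t ht h
    have hb : ∀ (w : C(Y, ℝ)), ‖w‖ ≤ ‖u‖ + ‖v‖ → ∀ x, |-(w (i x)) / t| ≤ (‖u‖ + ‖v‖) / t := by
      intro w hw x
      rw [abs_div, abs_neg, abs_of_pos ht]
      gcongr
      exact (w.norm_coe_le_norm _).trans hw
    have := aux_dual_le d hd_symm hd_tri hd_self hd_lsc μ ν x₀ V hV
      (fun x => -(u (i x)) / t) (fun x => - (v (i x)) / t)
      ((u.continuous.comp hi.continuous).neg.div_const t)
      ((v.continuous.comp hi.continuous).neg.div_const t) ((‖u‖ + ‖v‖) / t)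
      (hb u (by simp)) (hb v (by simp)) (fun x y => by
        rw [← add_div, div_le_iff₀ ht]
        have := h x y
        linarith)
    rw [integral_div, integral_div, integral_neg, integral_neg, ← add_div, div_le_iff₀ ht] at this
    linarith
  have hdual : ∀ (u v : C(Y, ℝ)) (t : ℝ), 0 ≤ t → (∀ x y, 0 ≤ u (i x) + v (i y) + t * d x y) →
      0 ≤ ∫ x, u (i x) ∂μ + ∫ x, v (i x) ∂ν + t * V := by
    intro u v t ht h
    refine le_of_forall_pos_le_add fun ε hε => ?_
    have h1 := hpos u v (t + ε / (V + 1)) (by positivity) (fun x y => by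
      have := h x y
      have : 0 ≤ ε / (V + 1) * d x y := mul_nonneg (by positivity) (hd_nonneg x y)
      linarith)
    have h2 : ε / (V + 1) * V ≤ ε := by
      rw [div_mul_eq_mul_div, div_le_iff₀ (by positivity)]
      nlinarith
    linarith
  obtain ⟨Λ, hΛ⟩ := aux_functional i him.measurable d μ ν V hdual
  have hΛpos : ∀ f, 0 ≤ f → 0 ≤ Λ f := by
    intro f hf
    have := hΛ (-f) 0 0 0 le_rfl (fun x y => by
      have : 0 ≤ f (i x, i y) := hf (i x, i y)
      simpa using this)
    simpa using this
  let P : CompactlySupportedContinuousMap (Y × Y) ℝ →ₚ[ℝ] ℝ := PositiveLinearMap.mk₀ Λ hΛpos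
  let π := RealRMK.rieszMeasure P
  have hπ : ∀ f : CompactlySupportedContinuousMap (Y × Y) ℝ, ∫ z, f z ∂π = Λ f :=
    fun f => RealRMK.integral_rieszMeasure P f
  have hfin : IsFiniteMeasure π := by
    have : IsFiniteMeasureOnCompacts π := by
      change IsFiniteMeasureOnCompacts (RealRMK.rieszMeasure P)
      infer_instance
    exact ⟨isCompact_univ.measure_lt_top⟩
  let E : C(Y × Y, ℝ) → CompactlySupportedContinuousMap (Y × Y) ℝ :=
    fun f => CompactlySupportedContinuousMap.continuousMapEquiv f
  have hE : ∀ f z, E f z = f z := fun f z => rfl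
  -- marginals
  have hm1 : π.map Prod.fst = μ.map i := by
    have : IsFiniteMeasure (μ.map i) := by infer_instance
    refine ext_of_forall_integral_eq_of_IsFiniteMeasure fun f => ?_
    rw [integral_map measurable_fst.aemeasurable f.continuous.measurable.aestronglyMeasurable,
      him.integral_map]
    let u : C(Y, ℝ) := f.toContinuousMap
    let F : C(Y × Y, ℝ) := ⟨fun z => f z.1, f.continuous.comp continuous_fst⟩
    have e : ∫ z, f z.1 ∂π = Λ (E F) := hπ (E F)
    rw [e]
    apply le_antisymm
    · have := hΛ (E F) u 0 0 le_rfl (fun x y => by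
        simp only [hE, ContinuousMap.zero_apply, zero_mul, add_zero]; exact le_rfl)
      simp only [ContinuousMap.zero_apply, integral_zero, add_zero, zero_add, zero_mul] at this
      exact this
    · have := hΛ (- E F) (-u) 0 0 le_rfl (fun x y => by
        simp only [CompactlySupportedContinuousMap.coe_neg, Pi.neg_apply, ContinuousMap.coe_neg,
          hE, ContinuousMap.zero_apply, zero_mul, add_zero]; exact le_rfl)
      simp only [map_neg, ContinuousMap.coe_neg, Pi.neg_apply, integral_neg,
        ContinuousMap.zero_apply, integral_zero, add_zero, zero_mul, neg_le_neg_iff] at this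
      exact this
  have hm2 : π.map Prod.snd = ν.map i := by
    have : IsFiniteMeasure (ν.map i) := by infer_instance
    refine ext_of_forall_integral_eq_of_IsFiniteMeasure fun f => ?_
    rw [integral_map measurable_snd.aemeasurable f.continuous.measurable.aestronglyMeasurable,
      him.integral_map]
    let u : C(Y, ℝ) := f.toContinuousMap
    let F : C(Y × Y, ℝ) := ⟨fun z => f z.2, f.continuous.comp continuous_snd⟩
    have e : ∫ z, f z.2 ∂π = Λ (E F) := hπ (E F)
    rw [e]
    apply le_antisymm
    · have := hΛ (E F) 0 u 0 le_rfl (fun x y => by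
        simp only [hE, ContinuousMap.zero_apply, zero_mul, add_zero, zero_add]; exact le_rfl)
      simp only [ContinuousMap.zero_apply, integral_zero, add_zero, zero_add, zero_mul] at this
      exact this
    · have := hΛ (- E F) 0 (-u) 0 le_rfl (fun x y => by
        simp only [CompactlySupportedContinuousMap.coe_neg, Pi.neg_apply, ContinuousMap.coe_neg,
          hE, ContinuousMap.zero_apply, zero_mul, add_zero, zero_add]; exact le_rfl)
      simp only [map_neg, ContinuousMap.coe_neg, Pi.neg_apply, integral_neg, zero_add,
        ContinuousMap.zero_apply, integral_zero, add_zero, zero_mul, neg_le_neg_iff] at this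
      exact this
  -- pull back to X × X
  have hj : MeasurableEmbedding (Prod.map i i) := him.prodMap him
  have hnull : ∀ (ρ : Measure X), (ρ.map i) (range i)ᶜ = 0 := by
    intro ρ
    rw [him.map_apply]
    simp
  have hrange : ∀ᵐ z ∂π, z ∈ range (Prod.map i i) := by
    have a1 : ∀ᵐ z ∂π, z.1 ∈ range i := by
      have := hnull μ
      rw [← hm1, Measure.map_apply measurable_fst him.measurableSet_range.compl] at this
      exact this
    have a2 : ∀ᵐ z ∂π, z.2 ∈ range i := by
      have := hnull ν
      rw [← hm2, Measure.map_apply measurable_snd him.measurableSet_range.compl] at this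
      exact this
    filter_upwards [a1, a2] with z h1 h2
    rw [range_prodMap]
    exact ⟨h1, h2⟩
  set π' := π.comap (Prod.map i i) with hπ'
  have hmap : π'.map (Prod.map i i) = π := by
    rw [hπ', hj.map_comap, Measure.restrict_eq_self_of_ae_mem hrange]
  have hinj : ∀ ρ₁ ρ₂ : Measure X, ρ₁.map i = ρ₂.map i → ρ₁ = ρ₂ := by
    intro ρ₁ ρ₂ h
    rw [← him.comap_map ρ₁, h, him.comap_map]
  refine iInf_le_of_le π' (iInf_le_of_le ⟨hinj _ _ ?_, hinj _ _ ?_⟩ ?_)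
  · rw [← hm1, ← hmap, Measure.map_map him.measurable measurable_fst,
      Measure.map_map measurable_fst hj.measurable]
    rfl
  · rw [← hm2, ← hmap, Measure.map_map him.measurable measurable_snd,
      Measure.map_map measurable_snd hj.measurable]
    rfl
  -- the cost
  have : Nonempty (X × X) := ⟨(x₀, x₀)⟩
  obtain ⟨f, f0, fle, flim⟩ := aux_approx (Prod.map i i) (hi.prodMap hi)
    (fun p : X × X => d p.1 p.2) (fun p => hd_nonneg _ _) hd_lsc
  have hfn : ∀ n, ∫⁻ p, ENNReal.ofReal (f n (Prod.map i i p)) ∂π' ≤ ENNReal.ofReal V := by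
    intro n
    have h1 : ∫⁻ p, ENNReal.ofReal (f n (Prod.map i i p)) ∂π' = ∫⁻ z, ENNReal.ofReal (f n z) ∂π := by
      rw [← hmap, hj.lintegral_map]
    have hint : Integrable (f n) π :=
      Integrable.of_bound (f n).continuous.measurable.aestronglyMeasurable ‖f n‖
        (Filter.Eventually.of_forall fun z => (f n).norm_coe_le_norm z)
    rw [h1, ← ofReal_integral_eq_lintegral_ofReal hint (Filter.Eventually.of_forall (f0 n))]
    apply ENNReal.ofReal_le_ofReal
    have h2 : ∫ z, f n z ∂π = Λ (E (f n)) := hπ (E (f n))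
    rw [h2]
    have := hΛ (E (f n)) 0 0 1 zero_le_one (fun x y => by
      simpa [hE] using fle n (x, y))
    simpa using this
  have hmeas : ∀ n, Measurable fun p : X × X => ENNReal.ofReal (f n (Prod.map i i p)) := fun n =>
    ((f n).continuous.measurable.comp hj.measurable).ennreal_ofReal
  calc ∫⁻ p, ENNReal.ofReal (d p.1 p.2) ∂π'
      ≤ ∫⁻ p, Filter.liminf (fun n => ENNReal.ofReal (f n (Prod.map i i p))) Filter.atTop ∂π' := by
        refine lintegral_mono fun p => ?_
        refine le_of_forall_lt fun a ha => ?_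
        obtain ⟨b, hab, hb⟩ := exists_between ha
        have hbt : b ≠ ⊤ := ne_top_of_lt hb
        refine hab.trans_le (Filter.le_liminf_of_le (by isBoundedDefault) ?_)
        have hb' : b.toReal < d p.1 p.2 := (ENNReal.lt_ofReal_iff_toReal_lt hbt).mp hb
        filter_upwards [flim p _ hb'] with n hn
        rw [← ENNReal.ofReal_toReal hbt]
        exact ENNReal.ofReal_le_ofReal hn
    _ ≤ Filter.liminf (fun n => ∫⁻ p, ENNReal.ofReal (f n (Prod.map i i p)) ∂π') Filter.atTop :=
        lintegral_liminf_le hmeas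
    _ ≤ ENNReal.ofReal V := by
        refine Filter.liminf_le_of_le (by isBoundedDefault) fun b hb => ?_
        obtain ⟨n, hn⟩ := hb.exists
        exact hn.trans (hfn n)

theorem aux_KR {X : Type*} [TopologicalSpace X] [PolishSpace X] [MeasurableSpace X]
    [BorelSpace X] (d : X → X → ℝ)
    (hd_symm : ∀ x y, d x y = d y x)
    (hd_tri : ∀ x y z, d x z ≤ d x y + d y z)
    (hd_self : ∀ x, d x x = 0)
    (hd_nonneg : ∀ x y, 0 ≤ d x y)
    (hd_lsc : LowerSemicontinuous fun p : X × X => d p.1 p.2)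
    (μ ν : Measure X) [IsProbabilityMeasure μ] [IsProbabilityMeasure ν] (x₀ : X) (V : ℝ)
    (hV : ∀ φ : X → ℝ, Measurable φ → (∃ C : ℝ, ∀ x, |φ x| ≤ C) →
        (∀ x y, |φ x - φ y| ≤ d x y) → ∫ x, φ x ∂ν - ∫ x, φ x ∂μ ≤ V) :
    optTransportCost d μ ν ≤ ENNReal.ofReal V := by
  letI : MetricSpace X := TopologicalSpace.metrizableSpaceMetric X
  obtain ⟨i, hi⟩ := Metric.PiNatEmbed.exists_embedding_to_hilbert_cube (X := X)
  refine aux_KR' i hi d hd_symm hd_tri hd_self hd_nonneg hd_lsc μ ν x₀ V fun φ h1 h2 h3 => ?_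
  have := hV (fun x => - φ x) h1.neg (by simpa using h2) (fun x y => by
    have := h3 y x
    rw [hd_symm y x] at this
    convert this using 2; ring)
  rw [integral_neg, integral_neg] at this
  linarith

theorem aux_conj (α : ℝ≥0∞ → ℝ≥0∞) (hα : ClassCFun α) (H : ℝ) (hH0 : 0 ≤ H)
    (y1 y2 Δ : ℝ≥0) (h12 : y1 < y2) (h2Δ : y2 < Δ) (hy1 : ENNReal.ofReal H < α y1)
    (h : ∀ s : ℝ, 0 ≤ s → ENNReal.ofReal (s * Δ) ≤ ENNReal.ofReal H +
      monoConj α (ENNReal.ofReal s)) : False := by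
  obtain ⟨hmono, h0, hconv, -⟩ := hα
  have h12' : (y1 : ℝ) < y2 := h12
  have h2Δ' : (y2 : ℝ) < Δ := h2Δ
  by_cases htop : α y2 = ⊤
  · set s : ℝ := (H + 1) / (Δ - y2) with hs
    have hs0 : 0 ≤ s := div_nonneg (by linarith) (by linarith)
    have hc : monoConj α (ENNReal.ofReal s) ≤ ENNReal.ofReal (s * y2) := by
      refine iSup_le fun t => ?_
      rcases le_total y2 t with ht | ht
      · have : α t = ⊤ := top_unique (htop ▸ hmono (by exact_mod_cast ht))
        simp [this]
      · refine tsub_le_self.trans ?_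
        rw [ENNReal.ofReal_mul hs0, ENNReal.ofReal_coe_nnreal]
        gcongr
    have h1 := (h s hs0).trans (add_le_add le_rfl hc)
    rw [← ENNReal.ofReal_add hH0 (by positivity), ENNReal.ofReal_le_ofReal_iff (by positivity)] at h1
    have h3 : s * (Δ - y2) = H + 1 := by
      rw [hs]; field_simp [show (Δ : ℝ) - y2 ≠ 0 by linarith]
    nlinarith
  · have hfin : ∀ t : ℝ≥0, t ≤ y2 → α t ≠ ⊤ := fun t ht =>
      ne_top_of_le_ne_top htop (hmono (by exact_mod_cast ht))
    have cr : ∀ (s t r : ℝ≥0), s < r → r < t → α t ≠ ⊤ →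
        (α r).toReal * (t - s) ≤ (α s).toReal * (t - r) + (α t).toReal * (r - s) := by
      intro s t r hsr hrt ht
      have hs : α s ≠ ⊤ := ne_top_of_le_ne_top ht (hmono (by exact_mod_cast (hsr.trans hrt).le))
      have hsr' : (s : ℝ) < r := hsr
      have hrt' : (r : ℝ) < t := hrt
      have hpos : (0 : ℝ) < t - s := by linarith
      let p : ℝ≥0 := ⟨(t - r) / (t - s), div_nonneg (by linarith) hpos.le⟩
      let q : ℝ≥0 := ⟨(r - s) / (t - s), div_nonneg (by linarith) hpos.le⟩
      have hp : (p : ℝ) = (t - r) / (t - s) := rfl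
      have hq : (q : ℝ) = (r - s) / (t - s) := rfl
      have hpq : p + q = 1 := by
        apply NNReal.eq
        push_cast
        rw [hp, hq]
        field_simp
        ring
      have hr : p * s + q * t = r := by
        apply NNReal.eq
        push_cast
        rw [hp, hq]
        field_simp
        ring
      have h1 := hconv s t p q hpq
      have h2 : (p : ℝ≥0∞) * s + q * t = r := by rw [← hr]; push_cast; rfl
      rw [h2] at h1
      have hA : (p : ℝ≥0∞) * α s ≠ ⊤ := ENNReal.mul_ne_top (by simp) hs
      have hB : (q : ℝ≥0∞) * α t ≠ ⊤ := ENNReal.mul_ne_top (by simp) ht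
      have h3 := ENNReal.toReal_mono (by simp [hA, hB]) h1
      rw [ENNReal.toReal_add hA hB, ENNReal.toReal_mul, ENNReal.toReal_mul,
        ENNReal.coe_toReal, ENNReal.coe_toReal, hp, hq] at h3
      calc _ ≤ ((t - r) / (t - s) * (α s).toReal + (r - s) / (t - s) * (α t).toReal)
              * ((t : ℝ) - s) := by gcongr
        _ = _ := by field_simp
    set a1 := (α y1).toReal with ha1
    set a2 := (α y2).toReal with ha2
    have ha12 : a1 ≤ a2 := ENNReal.toReal_mono htop (hmono (by exact_mod_cast h12.le))
    have hHa : H < a1 := by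
      rw [← ENNReal.ofReal_toReal (hfin y1 h12.le)] at hy1
      exact (ENNReal.ofReal_lt_ofReal_iff_of_nonneg hH0).mp hy1
    set s : ℝ := (a2 - a1) / (y2 - y1) with hs
    have hs0 : 0 ≤ s := div_nonneg (by linarith) (by linarith)
    have hsmul : s * (y2 - y1) = a2 - a1 := by
      rw [hs]; field_simp [show (y2 : ℝ) - y1 ≠ 0 by linarith]
    have key : ∀ t : ℝ≥0, α t ≠ ⊤ → s * t - (α t).toReal ≤ s * y2 - a1 := by
      intro t ht
      have hpos : (0 : ℝ) < y2 - y1 := by linarith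
      rcases lt_or_ge t y1 with h1 | h1
      · have := cr t y2 y1 h1 h12 htop
        have h1' : (t : ℝ) < y1 := h1
        have e : (α y1).toReal * (y2 - t) ≤ (α t).toReal * (y2 - y1)
          + (a1 + s * (y2 - y1)) * (y1 - t) := by
          rw [hsmul]; convert this using 3; ring
        rw [← ha1] at e
        have : 0 ≤ (y2 - y1) * ((α t).toReal - a1 + s * (y1 - t)) := by nlinarith
        have := nonneg_of_mul_nonneg_right this hpos
        nlinarith
      · rcases le_or_gt t y2 with h2 | h2
        · have : a1 ≤ (α t).toReal := ENNReal.toReal_mono ht (hmono (by exact_mod_cast h1))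
          have h2' : (t : ℝ) ≤ y2 := h2
          nlinarith
        · have := cr y1 t y2 h12 h2 ht
          have h2' : (y2 : ℝ) < t := h2
          rw [← ha1, ← ha2] at this
          have e : a2 = a1 + s * (y2 - y1) := by linarith
          rw [e] at this
          have : 0 ≤ (y2 - y1) * ((α t).toReal - a1 - s * (t - y1)) := by nlinarith
          have := nonneg_of_mul_nonneg_right this hpos
          nlinarith
    have hnn : 0 ≤ s * y2 - a1 := by simpa [h0] using key 0 (by simp [h0])
    have hc : monoConj α (ENNReal.ofReal s) ≤ ENNReal.ofReal (s * y2 - a1) := by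
      refine iSup_le fun t => ?_
      by_cases ht : α t = ⊤
      · simp [ht]
      · rw [← ENNReal.ofReal_toReal ht, ← ENNReal.ofReal_coe_nnreal, ← ENNReal.ofReal_mul hs0,
          ← ENNReal.ofReal_sub _ ENNReal.toReal_nonneg]
        exact ENNReal.ofReal_le_ofReal (by simpa using key t ht)
    have h1 := (h s hs0).trans (add_le_add le_rfl hc)
    rw [← ENNReal.ofReal_add hH0 hnn, ENNReal.ofReal_le_ofReal_iff (by positivity)] at h1
    nlinarith

theorem aux_dv {X : Type*} [MeasurableSpace X] (μ ν : Measure X) [IsProbabilityMeasure μ]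
    [IsProbabilityMeasure ν] (hac : ν ≪ μ) (hint : Integrable (llr ν μ) ν)
    (ψ : X → ℝ) (hψ : Measurable ψ) (C : ℝ) (hC : ∀ x, |ψ x| ≤ C) :
    ∫ x, ψ x ∂ν ≤ ∫ x, llr ν μ x ∂ν + Real.log (∫ x, Real.exp (ψ x) ∂μ) := by
  have h1 : Integrable ψ ν :=
    Integrable.of_bound hψ.aestronglyMeasurable C (Filter.Eventually.of_forall hC)
  have h2 : Integrable (fun x => Real.exp (ψ x)) μ :=
    Integrable.of_bound hψ.exp.aestronglyMeasurable (Real.exp C)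
      (Filter.Eventually.of_forall fun x => by
        rw [Real.norm_eq_abs, Real.abs_exp]
        exact Real.exp_le_exp.mpr (abs_le.mp (hC x)).2)
  have := isProbabilityMeasure_tilted h2
  have h3 := integral_llr_tilted_right hac h1 h2 hint
  have h4 := InformationTheory.integral_llr_add_sub_measure_univ_nonneg
    (hac.trans (absolutelyContinuous_tilted h2)) (integrable_llr_tilted_right hac h1 hint h2)
  simp at h4
  linarith

theorem aux_easy {X : Type*} [MeasurableSpace X] (d : X → X → ℝ)
    (μ ν : Measure X) [IsProbabilityMeasure μ] [IsProbabilityMeasure ν]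
    (φ : X → ℝ) (hφ : Measurable φ) (C : ℝ) (hC : ∀ x, |φ x| ≤ C)
    (hlip : ∀ x y, |φ x - φ y| ≤ d x y) :
    ENNReal.ofReal (∫ x, φ x ∂ν - ∫ x, φ x ∂μ) ≤ optTransportCost d μ ν := by
  refine le_iInf fun π => le_iInf fun ⟨h1, h2⟩ => ?_
  have : IsProbabilityMeasure π := by
    refine ⟨?_⟩
    have : π.map Prod.fst univ = 1 := by rw [h1]; simp
    rwa [Measure.map_apply measurable_fst MeasurableSet.univ, preimage_univ] at this
  have i1 : Integrable (fun p : X × X => φ p.1) π :=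
    Integrable.of_bound (hφ.comp measurable_fst).aestronglyMeasurable C
      (Filter.Eventually.of_forall fun p => hC p.1)
  have i2 : Integrable (fun p : X × X => φ p.2) π :=
    Integrable.of_bound (hφ.comp measurable_snd).aestronglyMeasurable C
      (Filter.Eventually.of_forall fun p => hC p.2)
  have e1 : ∫ x, φ x ∂μ = ∫ p, φ p.1 ∂π := by
    rw [← h1, integral_map measurable_fst.aemeasurable hφ.aestronglyMeasurable]
  have e2 : ∫ x, φ x ∂ν = ∫ p, φ p.2 ∂π := by
    rw [← h2, integral_map measurable_snd.aemeasurable hφ.aestronglyMeasurable]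
  rw [e1, e2, ← integral_sub i2 i1]
  have i3 := i2.sub i1
  calc ENNReal.ofReal (∫ p, (φ p.2 - φ p.1) ∂π)
      ≤ ENNReal.ofReal (∫ p, |φ p.2 - φ p.1| ∂π) :=
        ENNReal.ofReal_le_ofReal (integral_mono i3 i3.abs fun p => le_abs_self _)
    _ = ∫⁻ p, ENNReal.ofReal |φ p.2 - φ p.1| ∂π :=
        ofReal_integral_eq_lintegral_ofReal i3.abs (Filter.Eventually.of_forall fun p => abs_nonneg _)
    _ ≤ _ := lintegral_mono fun p => ENNReal.ofReal_le_ofReal (by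
        rw [abs_sub_comm]; exact hlip _ _)

/-- Dual characterization of convex `T₁`-inequalities (Bobkov–Götze type). -/
theorem T1_dual_characterization
    {X : Type*} [TopologicalSpace X] [PolishSpace X] [MeasurableSpace X] [BorelSpace X]
    (d : X → X → ℝ)
    (hd_symm : ∀ x y, d x y = d y x)
    (hd_tri : ∀ x y z, d x z ≤ d x y + d y z)
    (hd_self : ∀ x, d x x = 0)
    (hd_sep : ∀ x y, d x y = 0 → x = y)
    (hd_nonneg : ∀ x y, 0 ≤ d x y)
    (hd_lsc : LowerSemicontinuous fun p : X × X => d p.1 p.2)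
    (μ : Measure X) [IsProbabilityMeasure μ]
    (a₀ : ℝ) (ha₀ : 0 < a₀) (x₀ : X)
    (hexp : ∫⁻ x, ENNReal.ofReal (Real.exp (a₀ * d x₀ x)) ∂μ < ⊤)
    (α : ℝ≥0∞ → ℝ≥0∞) (hα : ClassCFun α) :
    (∀ ν : Measure X, IsProbabilityMeasure ν →
        (∫⁻ x, ENNReal.ofReal (d x₀ x) ∂ν) < ⊤ →
        α (optTransportCost d μ ν) ≤ relEntropy ν μ) ↔
      ∀ s : ℝ, 0 ≤ s → ∀ φ : X → ℝ, Measurable φ → (∃ C : ℝ, ∀ x, |φ x| ≤ C) →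
        (∀ x y, |φ x - φ y| ≤ d x y) →
        ENNReal.ofReal (Real.log (∫ x, Real.exp (s * (φ x - ∫ y, φ y ∂μ)) ∂μ)) ≤
          monoConj α (ENNReal.ofReal s) := by
  constructor
  · rintro hT s hs φ hφ ⟨C, hC⟩ hlip
    have hsφ : Measurable fun x => s * φ x := hφ.const_mul s
    have hbd : ∀ x, s * φ x ≤ s * C := fun x => by
      have := (abs_le.mp (hC x)).2
      gcongr
    have he : Integrable (fun x => Real.exp (s * φ x)) μ :=
      Integrable.of_bound hsφ.exp.aestronglyMeasurable (Real.exp (s * C))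
        (Filter.Eventually.of_forall fun x => by
          rw [Real.norm_eq_abs, Real.abs_exp]
          exact Real.exp_le_exp.mpr (hbd x))
    set ν := μ.tilted (fun x => s * φ x) with hν
    have hνp : IsProbabilityMeasure ν := isProbabilityMeasure_tilted he
    set Z := ∫ x, Real.exp (s * φ x) ∂μ with hZ
    have hZpos : 0 < Z := integral_exp_pos he
    have hdm : Measurable fun x => d x₀ x :=
      (hd_lsc.comp (Continuous.prodMk_right x₀)).measurable
    have hmom : ∫⁻ x, ENNReal.ofReal (d x₀ x) ∂ν < ⊤ := by
      rw [hν, lintegral_tilted]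
      calc _ ≤ ∫⁻ x, ENNReal.ofReal (Real.exp (s * C) / Z / a₀) *
            ENNReal.ofReal (Real.exp (a₀ * d x₀ x)) ∂μ := by
            refine lintegral_mono fun x => ?_
            simp only
            rw [← ENNReal.ofReal_mul (by positivity), ← ENNReal.ofReal_mul (by positivity)]
            apply ENNReal.ofReal_le_ofReal
            have h1 := Real.add_one_le_exp (a₀ * d x₀ x)
            have h2 : d x₀ x ≤ Real.exp (a₀ * d x₀ x) / a₀ := by
              rw [le_div_iff₀ ha₀]; linarith
            calc Real.exp (s * φ x) / Z * d x₀ x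
                ≤ Real.exp (s * C) / Z * (Real.exp (a₀ * d x₀ x) / a₀) := by
                  have := hd_nonneg x₀ x
                  have := hbd x
                  gcongr
              _ = _ := by ring
        _ = ENNReal.ofReal (Real.exp (s * C) / Z / a₀) *
            ∫⁻ x, ENNReal.ofReal (Real.exp (a₀ * d x₀ x)) ∂μ :=
            lintegral_const_mul' _ _ ENNReal.ofReal_ne_top
        _ < ⊤ := ENNReal.mul_lt_top ENNReal.ofReal_lt_top hexp
    have hac : ν ≪ μ := tilted_absolutelyContinuous _ _
    have hφν : Integrable φ ν :=
      Integrable.of_bound hφ.aestronglyMeasurable C (Filter.Eventually.of_forall hC)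
    have hlog : (fun x => Real.log (ν.rnDeriv μ x).toReal) =ᵐ[ν]
        fun x => s * φ x - Real.log Z := hac.ae_le (log_rnDeriv_tilted_left_self he)
    have hint : Integrable (fun x => Real.log (ν.rnDeriv μ x).toReal) ν :=
      ((hφν.const_mul s).sub (integrable_const _)).congr hlog.symm
    have hH : ∫ x, Real.log (ν.rnDeriv μ x).toReal ∂ν = s * ∫ x, φ x ∂ν - Real.log Z := by
      rw [integral_congr_ae hlog, integral_sub (hφν.const_mul s) (integrable_const _),
        integral_const_mul]
      simp
    have h1 := hT ν hνp hmom
    rw [relEntropy, if_pos ⟨hac, hint⟩, hH] at h1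
    have h2 := aux_easy d μ ν φ hφ C hC hlip
    set Δ := ∫ x, φ x ∂ν - ∫ x, φ x ∂μ with hΔ
    have h3 := (hα.1 h2).trans h1
    have hL : Real.log (∫ x, Real.exp (s * (φ x - ∫ y, φ y ∂μ)) ∂μ)
        = Real.log Z - s * ∫ y, φ y ∂μ := by
      have : ∀ x, Real.exp (s * (φ x - ∫ y, φ y ∂μ))
          = Real.exp (s * φ x) * Real.exp (- (s * ∫ y, φ y ∂μ)) := fun x => by
        rw [← Real.exp_add]; ring_nf
      simp only [this]
      rw [integral_mul_const, Real.log_mul hZpos.ne' (Real.exp_pos _).ne', Real.log_exp]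
      ring
    rw [hL]
    refine le_trans ?_ (le_iSup (fun t : ℝ≥0 => ENNReal.ofReal s * (t : ℝ≥0∞) - α (t : ℝ≥0∞))
      Δ.toNNReal)
    change _ ≤ ENNReal.ofReal s * ENNReal.ofReal Δ - α (ENNReal.ofReal Δ)
    refine le_trans ?_ (tsub_le_tsub_left h3 _)
    rw [← ENNReal.ofReal_mul hs]
    refine ENNReal.le_sub_of_add_le_right ENNReal.ofReal_ne_top ?_
    have hHnn : 0 ≤ s * ∫ x, φ x ∂ν - Real.log Z := by
      have := InformationTheory.integral_llr_add_sub_measure_univ_nonneg hac hint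
      simp only [llr_def, hH, probReal_univ] at this
      linarith
    have hLnn : 0 ≤ Real.log Z - s * ∫ y, φ y ∂μ := by
      have := aux_dv μ μ Measure.AbsolutelyContinuous.rfl
        ((integrable_congr (llr_self μ)).mpr (integrable_zero _ _ _)) (fun x => s * φ x) hsφ
        (s * C) (fun x => by rw [abs_mul, abs_of_nonneg hs]; gcongr; exact hC x)
      rw [integral_congr_ae (llr_self μ), integral_const_mul] at this
      simp only [Pi.zero_apply, integral_zero] at this
      linarith
    rw [← ENNReal.ofReal_add hLnn hHnn]
    apply ENNReal.ofReal_le_ofReal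
    rw [hΔ]; linarith
  · intro hφ ν hν _
    by_cases hcond : ν ≪ μ ∧ Integrable (fun x => Real.log (ν.rnDeriv μ x).toReal) ν
    swap
    · rw [relEntropy, if_neg hcond]; exact le_top
    rw [relEntropy, if_pos hcond]
    obtain ⟨hac, hint⟩ := hcond
    set H := ∫ x, Real.log (ν.rnDeriv μ x).toReal ∂ν with hH
    have hHnn : 0 ≤ H := by
      have := InformationTheory.integral_llr_add_sub_measure_univ_nonneg hac hint
      simp only [llr_def, probReal_univ] at this
      linarith
    by_contra hcon
    push Not at hcon
    set T := optTransportCost d μ ν with hT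
    have hT0 : T ≠ 0 := by
      intro h0
      rw [h0, hα.2.1] at hcon
      simp at hcon
    rw [hα.2.2.2 T hT0] at hcon
    obtain ⟨y, hy⟩ := lt_iSup_iff.mp hcon
    obtain ⟨hyT, hy⟩ := lt_iSup_iff.mp hy
    obtain ⟨z, hyz, hzT⟩ := exists_between (show y < T from hyT)
    lift z to ℝ≥0 using ne_top_of_lt hzT
    lift y to ℝ≥0 using ne_top_of_lt hyz
    have hyz' : y < z := by exact_mod_cast hyz
    have : ∃ φ : X → ℝ, Measurable φ ∧ (∃ C : ℝ, ∀ x, |φ x| ≤ C) ∧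
        (∀ x y, |φ x - φ y| ≤ d x y) ∧ (z : ℝ) < ∫ x, φ x ∂ν - ∫ x, φ x ∂μ := by
      by_contra hno
      push Not at hno
      have := aux_KR d hd_symm hd_tri hd_self hd_nonneg hd_lsc μ ν x₀ z hno
      rw [ENNReal.ofReal_coe_nnreal] at this
      exact absurd hzT (not_lt.mpr this)
    obtain ⟨φ, hφm, ⟨C, hC⟩, hlip, hzΔ⟩ := this
    set Δ := ∫ x, φ x ∂ν - ∫ x, φ x ∂μ with hΔ
    have hΔ0 : 0 ≤ Δ := z.2.trans hzΔ.le
    refine aux_conj α hα H hHnn y z ⟨Δ, hΔ0⟩ hyz' hzΔ hy fun s hs => ?_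
    change ENNReal.ofReal (s * Δ) ≤ _
    have h1 := hφ s hs φ hφm ⟨C, hC⟩ hlip
    refine le_trans ?_ (add_le_add le_rfl h1)
    refine le_trans (ENNReal.ofReal_le_ofReal ?_) ENNReal.ofReal_add_le
    have h2 := aux_dv μ ν hac hint (fun x => s * (φ x - ∫ y, φ y ∂μ))
      ((hφm.sub_const _).const_mul s) (s * (C + |∫ y, φ y ∂μ|)) (fun x => by
        rw [abs_mul, abs_of_nonneg hs]
        gcongr
        exact (abs_sub _ _).trans (by gcongr; exact hC x))
    have hφν : Integrable φ ν :=
      Integrable.of_bound hφm.aestronglyMeasurable C (Filter.Eventually.of_forall hC)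
    rw [integral_const_mul, integral_sub hφν (integrable_const _), integral_const] at h2
    simp only [probReal_univ, one_smul] at h2
    exact h2

end
end

section
/- Let X be a Polish space, μ a Borel probability measure on X, and U a set of measurable real-valued functions on X with U = −U such that ∫ e^{a|φ|} dμ < ∞ for all φ ∈ U and all a > 0. Assume U contains a function that is not μ-almost everywhere constant. If α is in the class C and satisfies the norm-entropy inequality α(‖ν − μ‖*_U) ≤ H(ν|μ) for all probability measures ν with ∫ |φ| dν < ∞ for every φ ∈ U, then there exist constants a > 0 and t_1 > 0 such that α(t) ≤ a t² for all 0 ≤ t ≤ t_1. -/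
open MeasureTheory ENNReal Set
open scoped NNReal ENNReal

noncomputable section

/-- Basic properties of the perturbed measure `(1 + s g) μ`. -/
lemma perturb_props {X : Type*} [MeasurableSpace X] (μ : Measure X) [IsProbabilityMeasure μ]
    (g : X → ℝ) (hg : Measurable g) (hb : ∀ x, |g x| ≤ 2) (h0 : ∫ x, g x ∂μ = 0)
    (s : ℝ) (hs : 0 ≤ s) (hs1 : s ≤ 1 / 4) :
    IsProbabilityMeasure (μ.withDensity (fun x => ENNReal.ofReal (1 + s * g x))) ∧
    (∀ φ : X → ℝ, Integrable φ μ →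
      Integrable φ (μ.withDensity (fun x => ENNReal.ofReal (1 + s * g x))) ∧
      ∫ x, φ x ∂(μ.withDensity (fun x => ENNReal.ofReal (1 + s * g x)))
        = ∫ x, φ x ∂μ + s * ∫ x, g x * φ x ∂μ) ∧
    relEntropy (μ.withDensity (fun x => ENNReal.ofReal (1 + s * g x))) μ
      ≤ ENNReal.ofReal (4 * s ^ 2) := by
  set f : X → ℝ≥0∞ := fun x => ENNReal.ofReal (1 + s * g x) with hf
  have hfm : Measurable f := by fun_prop
  have hft : ∀ᵐ x ∂μ, f x < ∞ := Filter.Eventually.of_forall fun x => ENNReal.ofReal_lt_top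
  have hlow : ∀ x, 1 / 2 ≤ 1 + s * g x := fun x => by
    have := abs_le.1 (hb x)
    nlinarith
  have hpos : ∀ x, 0 ≤ 1 + s * g x := fun x => by linarith [hlow x]
  have hup : ∀ x, 1 + s * g x ≤ 3 / 2 := fun x => by
    have := abs_le.1 (hb x)
    nlinarith
  have hfr : ∀ x, (f x).toReal = 1 + s * g x := fun x => ENNReal.toReal_ofReal (hpos x)
  have hgi : Integrable g μ :=
    Integrable.of_bound hg.aestronglyMeasurable 2 (Filter.Eventually.of_forall hb)
  have hgm : ∀ φ : X → ℝ, Integrable φ μ → Integrable (fun x => g x * φ x) μ := fun φ hφ =>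
    hφ.bdd_mul hg.aestronglyMeasurable (Filter.Eventually.of_forall hb)
  have key : ∀ φ : X → ℝ, Integrable φ μ →
      Integrable φ (μ.withDensity f) ∧
      ∫ x, φ x ∂(μ.withDensity f) = ∫ x, φ x ∂μ + s * ∫ x, g x * φ x ∂μ := by
    intro φ hφ
    have e : (fun x => (f x).toReal • φ x) = fun x => φ x + s * (g x * φ x) := by
      funext x
      rw [hfr, smul_eq_mul]
      ring
    constructor
    · rw [integrable_withDensity_iff_integrable_smul' hfm hft, e]
      exact hφ.add ((hgm φ hφ).const_mul s)
    · rw [integral_withDensity_eq_integral_toReal_smul hfm hft, e,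
        integral_add hφ ((hgm φ hφ).const_mul s), integral_const_mul]
  have hprob : IsProbabilityMeasure (μ.withDensity f) := by
    have hsum : Integrable (fun x => 1 + s * g x) μ :=
      (integrable_const 1).add (hgi.const_mul s)
    constructor
    rw [withDensity_apply _ MeasurableSet.univ, Measure.restrict_univ, hf,
      ← ofReal_integral_eq_lintegral_ofReal hsum
        (Filter.Eventually.of_forall hpos),
      integral_add (integrable_const 1) (hgi.const_mul s), integral_const_mul, h0]
    simp
  have hac : μ.withDensity f ≪ μ := withDensity_absolutelyContinuous μ f
  have hae : (fun x => Real.log ((μ.withDensity f).rnDeriv μ x).toReal)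
      =ᵐ[μ.withDensity f] fun x => Real.log (1 + s * g x) := by
    filter_upwards [hac.ae_eq (Measure.rnDeriv_withDensity μ hfm)] with x hx
    rw [hx, hfr]
  have hlogb : ∀ x, |Real.log (1 + s * g x)| ≤ 1 := fun x => by
    have hp : 0 < 1 + s * g x := by linarith [hlow x]
    rw [abs_le]
    constructor
    · have h1 := Real.one_sub_inv_le_log_of_pos hp
      have : (1 + s * g x)⁻¹ ≤ (1 / 2 : ℝ)⁻¹ := inv_anti₀ (by norm_num) (hlow x)
      norm_num at this
      linarith
    · have := Real.log_le_sub_one_of_pos hp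
      linarith [hup x]
  have hlogi : Integrable (fun x => Real.log (1 + s * g x)) (μ.withDensity f) :=
    Integrable.of_bound
      (Real.measurable_log.comp ((hg.const_mul s).const_add 1)).aestronglyMeasurable 1 (Filter.Eventually.of_forall hlogb)
  refine ⟨hprob, key, ?_⟩
  unfold relEntropy
  rw [if_pos ⟨hac, hlogi.congr hae.symm⟩]
  apply ENNReal.ofReal_le_ofReal
  rw [integral_congr_ae hae]
  calc ∫ x, Real.log (1 + s * g x) ∂(μ.withDensity f)
      ≤ ∫ x, s * g x ∂(μ.withDensity f) := by
        apply integral_mono hlogi ((key g hgi).1.const_mul s)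
        intro x
        have := Real.log_le_sub_one_of_pos (show 0 < 1 + s * g x by linarith [hlow x])
        simp only
        linarith
    _ = s ^ 2 * ∫ x, g x * g x ∂μ := by
        rw [integral_const_mul, (key g hgi).2, h0]
        ring
    _ ≤ s ^ 2 * ∫ x, (4 : ℝ) ∂μ := by
        apply mul_le_mul_of_nonneg_left _ (sq_nonneg s)
        apply integral_mono (hgm g hgi) (integrable_const _)
        intro x
        have := abs_le.1 (hb x)
        simp only
        nlinarith
    _ = 4 * s ^ 2 := by
        simp
        ring

/-- A bounded centered function positively correlated with `φ`. -/
lemma exists_direction {X : Type*} [MeasurableSpace X] (μ : Measure X) [IsProbabilityMeasure μ]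
    (φ : X → ℝ) (hφ : Measurable φ) (hi : Integrable φ μ)
    (hnc : ¬ ∃ c : ℝ, ∀ᵐ x ∂μ, φ x = c) :
    ∃ g : X → ℝ, Measurable g ∧ (∀ x, |g x| ≤ 2) ∧ ∫ x, g x ∂μ = 0 ∧
      0 < ∫ x, g x * φ x ∂μ := by
  set m := ∫ x, φ x ∂μ with hm
  set h : X → ℝ := fun x => (φ x - m) / (1 + |φ x - m|) with hh
  have hhm : Measurable h := by
    have : Measurable fun x => |φ x - m| := (hφ.sub_const m).abs
    exact (hφ.sub_const m).div (this.const_add 1)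
  have hhb : ∀ x, |h x| ≤ 1 := fun x => by
    have h1 : 0 < 1 + |φ x - m| := by positivity
    rw [hh]
    simp only
    rw [abs_div, abs_of_pos h1, div_le_one h1]
    linarith
  have hhi : Integrable h μ :=
    Integrable.of_bound hhm.aestronglyMeasurable 1 (Filter.Eventually.of_forall hhb)
  have hψ : Integrable (fun x => φ x - m) μ := hi.sub (integrable_const m)
  have hψ0 : ∫ x, (φ x - m) ∂μ = 0 := by
    rw [integral_sub hi (integrable_const m)]
    simp [hm]
  have hEb : |∫ x, h x ∂μ| ≤ 1 := by
    have := norm_integral_le_of_norm_le_const (μ := μ) (f := h) (C := 1) (Filter.Eventually.of_forall hhb)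
    simpa using this
  have hhψ : Integrable (fun x => h x * (φ x - m)) μ :=
    hψ.bdd_mul hhm.aestronglyMeasurable (Filter.Eventually.of_forall hhb)
  have hnn : ∀ x, 0 ≤ h x * (φ x - m) := fun x => by
    have : h x * (φ x - m) = (φ x - m) ^ 2 / (1 + |φ x - m|) := by
      rw [hh]
      ring
    rw [this]
    positivity
  have hpos : 0 < ∫ x, h x * (φ x - m) ∂μ := by
    refine lt_of_le_of_ne (integral_nonneg hnn) fun h0 => hnc ⟨m, ?_⟩
    have := (integral_eq_zero_iff_of_nonneg hnn hhψ).1 h0.symm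
    filter_upwards [this] with x hx
    have h1 : 1 + |φ x - m| ≠ 0 := by positivity
    have h2 : (φ x - m) / (1 + |φ x - m|) * (φ x - m) = 0 := hx
    rcases mul_eq_zero.1 h2 with h3 | h3
    · rcases div_eq_zero_iff.1 h3 with h4 | h4
      · linarith
      · exact absurd h4 h1
    · linarith
  refine ⟨fun x => h x - ∫ y, h y ∂μ, hhm.sub_const _, fun x => ?_, ?_, ?_⟩
  · have := abs_sub (h x) (∫ y, h y ∂μ)
    linarith [hhb x]
  · rw [integral_sub hhi (integrable_const _)]
    simp
  · have e : (fun x => (h x - ∫ y, h y ∂μ) * φ x) = fun x =>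
        (h x * (φ x - m) - (∫ y, h y ∂μ) * (φ x - m)) + m * (h x - ∫ y, h y ∂μ) := by
      funext x
      ring
    have i1 : Integrable (fun x => h x * (φ x - m) - (∫ y, h y ∂μ) * (φ x - m)) μ :=
      hhψ.sub (hψ.const_mul _)
    have i2 : Integrable (fun x => m * (h x - ∫ y, h y ∂μ)) μ :=
      (hhi.sub (integrable_const _)).const_mul m
    rw [e, integral_add i1 i2, integral_sub hhψ (hψ.const_mul _),
      integral_const_mul, integral_const_mul, hψ0, integral_sub hhi (integrable_const _)]
    simpa using hpos

/-- Quadratic upper bound near zero for the function `α` of a convex norm-entropy inequality. -/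
theorem NEI_quadratic_near_zero
    {X : Type*} [TopologicalSpace X] [PolishSpace X] [MeasurableSpace X] [BorelSpace X]
    (μ : Measure X) [IsProbabilityMeasure μ]
    (U : Set (X → ℝ))
    (hUmeas : ∀ φ ∈ U, Measurable φ)
    (hUsymm : ∀ φ ∈ U, -φ ∈ U)
    (hUexp : ∀ φ ∈ U, ∀ a : ℝ, 0 < a →
      ∫⁻ x, ENNReal.ofReal (Real.exp (a * |φ x|)) ∂μ < ⊤)
    (hUnc : ∃ φ ∈ U, ¬ ∃ c : ℝ, ∀ᵐ x ∂μ, φ x = c)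
    (α : ℝ≥0∞ → ℝ≥0∞) (hα : ClassCFun α)
    (hNEI : ∀ ν : Measure X, IsProbabilityMeasure ν → (∀ φ ∈ U, Integrable φ ν) →
      α (⨆ φ ∈ U, ENNReal.ofReal ((∫ x, φ x ∂ν) - ∫ x, φ x ∂μ)) ≤ relEntropy ν μ) :
    ∃ a > (0 : ℝ), ∃ t₁ > (0 : ℝ), ∀ t : ℝ, 0 ≤ t → t ≤ t₁ →
      α (ENNReal.ofReal t) ≤ ENNReal.ofReal (a * t ^ 2) := by
  have hint : ∀ φ ∈ U, Integrable φ μ := by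
    intro φ hφ
    have hm := hUmeas φ hφ
    have he : Integrable (fun x => Real.exp (1 * |φ x|)) μ := by
      refine ⟨(Real.measurable_exp.comp (hm.abs.const_mul 1)).aestronglyMeasurable, ?_⟩
      rw [hasFiniteIntegral_iff_ofReal (Filter.Eventually.of_forall fun x => (Real.exp_pos _).le)]
      exact hUexp φ hφ 1 one_pos
    refine he.mono' hm.aestronglyMeasurable (Filter.Eventually.of_forall fun x => ?_)
    rw [Real.norm_eq_abs, one_mul]
    linarith [Real.add_one_le_exp |φ x|]
  obtain ⟨φ, hφU, hnc⟩ := hUnc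
  obtain ⟨g, hg, hb, h0, hc⟩ := exists_direction μ φ (hUmeas φ hφU) (hint φ hφU) hnc
  set c := ∫ x, g x * φ x ∂μ with hcdef
  refine ⟨4 / c ^ 2, by positivity, c / 4, by positivity, fun t ht ht1 => ?_⟩
  have hs1 : t / c ≤ 1 / 4 := by
    rw [div_le_iff₀ hc]
    linarith
  obtain ⟨hP, hI, hE⟩ := perturb_props μ g hg hb h0 (t / c) (by positivity) hs1
  have h1 := hNEI _ hP fun ψ hψ => (hI ψ (hint ψ hψ)).1
  have h2 : ENNReal.ofReal t ≤ ⨆ ψ ∈ U, ENNReal.ofReal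
      ((∫ x, ψ x ∂(μ.withDensity (fun x => ENNReal.ofReal (1 + t / c * g x))))
        - ∫ x, ψ x ∂μ) := by
    refine le_trans (le_of_eq ?_) (le_iSup₂ φ hφU)
    rw [(hI φ (hint φ hφU)).2, ← hcdef]
    congr 1
    field_simp
    ring
  refine ((hα.1 h2).trans h1).trans (hE.trans (le_of_eq ?_))
  congr 1
  ring

end
end

section
/- Let μ be a probability measure on a Polish space X and φ a measurable real-valued function such that ∫ e^{a_o|φ|} dμ < ∞ for some a_o > 0. Then the Orlicz norm ‖φ‖_ρ is finite and Λ_φ(s) ≤ ‖φ‖_ρ² s² / (1 − ‖φ‖_ρ s) for all 0 ≤ s < 1/‖φ‖_ρ, where Λ_φ(s) = log ∫ exp[s(φ − ∫ φ dμ)] dμ. -/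
open MeasureTheory ENNReal Set
open scoped NNReal ENNReal

noncomputable section

/-- Orlicz norm for the Young function `ρ(s) = e^{|s|} − 1`. -/
def orliczNormE {X : Type*} [MeasurableSpace X] (μ : Measure X) (φ : X → ℝ) : ℝ≥0∞ :=
  sInf {b : ℝ≥0∞ | 0 < b ∧ ∫⁻ x, ENNReal.ofReal (Real.exp (|φ x| / b.toReal)) ∂μ ≤ 2}

theorem exp_aux {x t v : ℝ} (ht : 0 ≤ t) (ht1 : t ≤ 1) (hv : 0 ≤ v) (hx : |x| ≤ t * v) :
    Real.exp x - 1 - x ≤ t ^ 2 * (Real.exp v - 1) := by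
  have key : ∀ y : ℝ, HasSum (fun k : ℕ => y ^ (k + 2) / ((k + 2).factorial : ℝ))
      (Real.exp y - 1 - y) := by
    intro y
    have h := NormedSpace.expSeries_div_hasSum_exp (𝔸 := ℝ) y
    rw [← Real.exp_eq_exp_ℝ] at h
    have h2 := (hasSum_nat_add_iff' 2).2 h
    simpa [Finset.sum_range_succ, sub_sub] using h2
  have h := hasSum_le (fun k => ?_) (key x) ((key v).mul_left (t ^ 2))
  · have : 0 ≤ t ^ 2 * v := by positivity
    linarith
  · rw [← mul_div_assoc]
    gcongr
    calc x ^ (k + 2) ≤ |x| ^ (k + 2) := by rw [← abs_pow]; exact le_abs_self _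
      _ ≤ (t * v) ^ (k + 2) := by gcongr
      _ = t ^ k * (t ^ 2 * v ^ (k + 2)) := by ring
      _ ≤ 1 * (t ^ 2 * v ^ (k + 2)) := by
        gcongr
        exact pow_le_one₀ ht ht1
      _ = _ := one_mul _

theorem bound_aux {X : Type*} [MeasurableSpace X]
    (μ : Measure X) [IsProbabilityMeasure μ]
    (φ : X → ℝ) (hφ : Measurable φ) (c : ℝ) (hc : 0 < c)
    (hint : ∫⁻ x, ENNReal.ofReal (Real.exp (|φ x| / c)) ∂μ ≤ 2)
    (s : ℝ) (hs : 0 ≤ s) (hsc : s * c ≤ 1) :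
    Real.log (∫ x, Real.exp (s * (φ x - ∫ y, φ y ∂μ)) ∂μ) ≤ (s * c) ^ 2 := by
  have hE : Integrable (fun x => Real.exp (|φ x| / c)) μ := by
    refine ⟨by fun_prop, ?_⟩
    rw [hasFiniteIntegral_iff_ofReal (Filter.Eventually.of_forall fun x => (Real.exp_pos _).le)]
    exact lt_of_le_of_lt hint (by simp)
  have hE2 : ∫ x, Real.exp (|φ x| / c) ∂μ ≤ 2 := by
    rw [integral_eq_lintegral_of_nonneg_ae
      (Filter.Eventually.of_forall fun x => (Real.exp_pos _).le) (by fun_prop)]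
    exact ENNReal.toReal_le_of_le_ofReal (by norm_num) (by simpa using hint)
  have hφi : Integrable φ μ := by
    refine (hE.const_mul c).mono' hφ.aestronglyMeasurable (Filter.Eventually.of_forall fun x => ?_)
    have := Real.add_one_le_exp (|φ x| / c)
    rw [Real.norm_eq_abs]
    calc |φ x| = c * (|φ x| / c) := by field_simp
      _ ≤ _ := by gcongr; linarith
  have hsφ : Integrable (fun x => Real.exp (s * φ x)) μ := by
    refine hE.mono' (by fun_prop) (Filter.Eventually.of_forall fun x => ?_)
    rw [Real.norm_eq_abs, abs_of_pos (Real.exp_pos _)]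
    gcongr
    rw [le_div_iff₀ hc]
    calc s * φ x * c = (s * c) * φ x := by ring
      _ ≤ (s * c) * |φ x| := by gcongr; exact le_abs_self _
      _ ≤ 1 * |φ x| := by gcongr
      _ = _ := one_mul _
  have hmain : ∫ x, Real.exp (s * φ x) ∂μ - 1 - s * ∫ x, φ x ∂μ ≤ (s * c) ^ 2 := by
    have h1 : ∫ x, (Real.exp (s * φ x) - 1 - s * φ x) ∂μ ≤
        ∫ x, (s * c) ^ 2 * (Real.exp (|φ x| / c) - 1) ∂μ := by
      refine integral_mono ((hsφ.sub (integrable_const 1)).sub (hφi.const_mul s))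
        ((hE.sub (integrable_const 1)).const_mul _) fun x => ?_
      refine exp_aux (by positivity) hsc (by positivity) ?_
      rw [abs_mul, abs_of_nonneg hs]
      apply le_of_eq
      field_simp
    have h0 : Integrable (fun x => Real.exp (s * φ x) - 1) μ := hsφ.sub (integrable_const 1)
    rw [integral_sub h0 (hφi.const_mul s),
      integral_sub hsφ (integrable_const 1), integral_const_mul, integral_const_mul,
      integral_sub hE (integrable_const 1)] at h1
    simp only [integral_const, probReal_univ, smul_eq_mul, mul_one] at h1
    refine h1.trans ?_
    have : 0 ≤ (s * c) ^ 2 := by positivity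
    nlinarith
  have hpos : 0 < ∫ x, Real.exp (s * φ x) ∂μ := integral_exp_pos hsφ
  have heq : ∫ x, Real.exp (s * (φ x - ∫ y, φ y ∂μ)) ∂μ =
      (∫ x, Real.exp (s * φ x) ∂μ) * Real.exp (-(s * ∫ y, φ y ∂μ)) := by
    rw [← integral_mul_const]
    congr 1
    ext x
    rw [← Real.exp_add]
    ring_nf
  rw [heq, Real.log_mul hpos.ne' (Real.exp_pos _).ne', Real.log_exp]
  have := Real.log_le_sub_one_of_pos hpos
  linarith

theorem finite_aux {X : Type*} [MeasurableSpace X]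
    (μ : Measure X) [IsProbabilityMeasure μ]
    (φ : X → ℝ) (hφ : Measurable φ)
    (a₀ : ℝ) (ha₀ : 0 < a₀)
    (hint : ∫⁻ x, ENNReal.ofReal (Real.exp (a₀ * |φ x|)) ∂μ < ⊤) :
    orliczNormE μ φ < ⊤ := by
  set I := ∫⁻ x, ENNReal.ofReal (Real.exp (a₀ * |φ x|)) ∂μ with hI
  set M : ℝ := max 1 I.toReal with hM
  have hM1 : 1 ≤ M := le_max_left _ _
  have hM0 : 0 < M := by linarith
  refine lt_of_le_of_lt (sInf_le (a := ENNReal.ofReal (M / a₀)) ⟨by simp; positivity, ?_⟩)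
    ENNReal.ofReal_lt_top
  rw [ENNReal.toReal_ofReal (by positivity)]
  have hpt : ∀ x, ENNReal.ofReal (Real.exp (|φ x| / (M / a₀))) ≤
      1 + ENNReal.ofReal (1 / M) * ENNReal.ofReal (Real.exp (a₀ * |φ x|)) := by
    intro x
    rw [← ENNReal.ofReal_mul (by positivity), ← ENNReal.ofReal_one,
      ← ENNReal.ofReal_add (by norm_num) (by positivity)]
    apply ENNReal.ofReal_le_ofReal
    have hM2 : 1 / M ≤ 1 := by rw [div_le_one hM0]; exact hM1
    have h := convexOn_exp.2 (mem_univ (0 : ℝ)) (mem_univ (a₀ * |φ x|))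
      (sub_nonneg.2 hM2) (show 0 ≤ 1 / M by positivity) (by ring)
    simp only [smul_eq_mul, mul_zero, zero_add, Real.exp_zero, mul_one] at h
    have e : |φ x| / (M / a₀) = 1 / M * (a₀ * |φ x|) := by field_simp
    rw [e]
    have : 0 < 1 / M := by positivity
    linarith
  refine (lintegral_mono hpt).trans ?_
  rw [lintegral_add_left measurable_const, lintegral_const_mul _ (by fun_prop), ← hI]
  have hIM : I ≤ ENNReal.ofReal M := by
    rw [← ENNReal.ofReal_toReal hint.ne]
    exact ENNReal.ofReal_le_ofReal (le_max_right _ _)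
  calc _ ≤ 1 + ENNReal.ofReal (1 / M) * ENNReal.ofReal M := by
        gcongr
        simp
    _ = 2 := by
      rw [← ENNReal.ofReal_mul (by positivity), one_div_mul_cancel hM0.ne']
      simp
      norm_num

/-- A Bernstein type inequality for the log-Laplace transform, in terms of the Orlicz norm. -/
theorem bernstein_orlicz
    {X : Type*} [TopologicalSpace X] [PolishSpace X] [MeasurableSpace X] [BorelSpace X]
    (μ : Measure X) [IsProbabilityMeasure μ]
    (φ : X → ℝ) (hφ : Measurable φ)
    (a₀ : ℝ) (ha₀ : 0 < a₀)
    (hint : ∫⁻ x, ENNReal.ofReal (Real.exp (a₀ * |φ x|)) ∂μ < ⊤) :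
    orliczNormE μ φ < ⊤ ∧
      ∀ s : ℝ, 0 ≤ s → s < 1 / (orliczNormE μ φ).toReal →
        Real.log (∫ x, Real.exp (s * (φ x - ∫ y, φ y ∂μ)) ∂μ) ≤
          (orliczNormE μ φ).toReal ^ 2 * s ^ 2 / (1 - (orliczNormE μ φ).toReal * s) := by
  have hfin := finite_aux μ φ hφ a₀ ha₀ hint
  refine ⟨hfin, fun s hs hsb => ?_⟩
  rcases hs.eq_or_lt with rfl | hs
  · simp
  set b := (orliczNormE μ φ).toReal with hb
  have hb0 : 0 < b := by
    have : 0 < 1 / b := hs.trans hsb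
    simpa using this
  have ht1 : b * s < 1 := by
    rw [lt_div_iff₀ hb0] at hsb
    linarith
  have ht0 : 0 < b * s := by positivity
  set t := b * s with ht
  have hδ : 0 < t * (1 - t) / 2 := by
    have : 0 < 1 - t := by linarith
    positivity
  have hlt : orliczNormE μ φ < ENNReal.ofReal (b * (1 + t * (1 - t) / 2)) := by
    rw [ENNReal.lt_ofReal_iff_toReal_lt hfin.ne, ← hb]
    nlinarith
  obtain ⟨c, ⟨hc0, hc⟩, hcb⟩ := sInf_lt_iff.1 hlt
  have hctop : c ≠ ⊤ := (hcb.trans ENNReal.ofReal_lt_top).ne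
  have hcpos : 0 < c.toReal := ENNReal.toReal_pos hc0.ne' hctop
  rw [ENNReal.lt_ofReal_iff_toReal_lt hctop] at hcb
  have hsc : s * c.toReal ≤ t * (1 + t * (1 - t) / 2) := by
    calc s * c.toReal ≤ s * (b * (1 + t * (1 - t) / 2)) := by gcongr
      _ = _ := by rw [ht]; ring
  have hle1 : t * (1 + t * (1 - t) / 2) ≤ 1 := by
    nlinarith [mul_pos ht0 (sub_pos.2 ht1)]
  refine (bound_aux μ φ hφ c.toReal hcpos hc s hs.le (hsc.trans hle1)).trans ?_
  have hu : 0 < 1 - t := by linarith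
  rw [le_div_iff₀ hu, ← mul_pow, ← ht]
  calc (s * c.toReal) ^ 2 * (1 - t) ≤ (t * (1 + t / 2)) ^ 2 * (1 - t) := by
        have h3 : s * c.toReal ≤ t * (1 + t / 2) := by
          refine hsc.trans ?_
          gcongr
          nlinarith
        have h4 : 0 ≤ s * c.toReal := by positivity
        exact mul_le_mul_of_nonneg_right (pow_le_pow_left₀ h4 h3 2) hu.le
    _ = t ^ 2 * (1 - (3 * t ^ 2 + t ^ 3) / 4) := by ring
    _ ≤ t ^ 2 * 1 := by
      gcongr
      have : 0 ≤ (3 * t ^ 2 + t ^ 3) / 4 := by positivity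
      linarith
    _ = t ^ 2 := mul_one _

end
end

section
/- Let μ be a probability measure on a Polish space X. For any probability measure ν absolutely continuous with respect to μ whose density f = dν/dμ satisfies ∫ |f| log|f| dμ < ∞, one has ‖dν/dμ − 1‖_ρ^* ≤ 2√(H(ν|μ)) + H(ν|μ). -/
open MeasureTheory ENNReal Set
open scoped NNReal ENNReal

noncomputable section

/-- Dual Orlicz norm for the Young function `ρ(s) = e^{|s|} − 1`. -/
def dualOrliczNorm {X : Type*} [MeasurableSpace X] (μ : Measure X) (f : X → ℝ) : ℝ :=
  sSup {r : ℝ | ∃ φ : X → ℝ, Measurable φ ∧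
    (∫⁻ x, ENNReal.ofReal (Real.exp |φ x|) ∂μ) ≤ 2 ∧ r = ∫ x, f x * φ x ∂μ}

theorem aux_exp (t a : ℝ) (ht0 : 0 ≤ t) (ht1 : t ≤ 1) :
    Real.exp (t * a) - 1 - t * a ≤ t ^ 2 * (Real.exp |a| - 1 - |a|) := by
  have hs : ∀ x : ℝ, HasSum (fun n : ℕ => x ^ (n + 2) / ((n + 2).factorial : ℝ))
      (Real.exp x - 1 - x) := by
    intro x
    have h := NormedSpace.expSeries_div_hasSum_exp (𝔸 := ℝ) x
    rw [← Real.exp_eq_exp_ℝ] at h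
    have h2 := (hasSum_nat_add_iff' 2).mpr h
    have e : Real.exp x - ∑ i ∈ Finset.range 2, x ^ i / (i.factorial : ℝ)
        = Real.exp x - 1 - x := by
      simp [Finset.sum_range_succ]
      ring
    rw [← e]
    exact h2
  refine hasSum_le ?_ (hs (t * a)) ((hs |a|).mul_left (t ^ 2))
  intro n
  rw [← mul_div_assoc]
  refine div_le_div_of_nonneg_right ?_ (by positivity)
  calc (t * a) ^ (n + 2) ≤ |(t * a) ^ (n + 2)| := le_abs_self _
    _ = t ^ n * (t ^ 2 * |a| ^ (n + 2)) := by
      rw [abs_pow, abs_mul, abs_of_nonneg ht0]; ring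
    _ ≤ 1 * (t ^ 2 * |a| ^ (n + 2)) := by
      gcongr
      exact pow_le_one₀ ht0 ht1
    _ = _ := one_mul _

theorem aux_young (f y : ℝ) (hf : 0 ≤ f) : f * y ≤ f * Real.log f - f + Real.exp y := by
  rcases hf.eq_or_lt with rfl | hf
  · simp [Real.exp_nonneg]
  · have h := Real.add_one_le_exp (y - Real.log f)
    rw [Real.exp_sub, Real.exp_log hf, le_div_iff₀ hf] at h
    linarith

theorem aux_pt (t f a : ℝ) (ht0 : 0 < t) (ht1 : t ≤ 1) (hf : 0 ≤ f) :
    t * ((f - 1) * a) ≤ f * Real.log f - f + 1 + t ^ 2 * (Real.exp |a| - 1) := by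
  have h1 := aux_exp t a ht0.le ht1
  have h2 := aux_young f (t * a) hf
  have h3 : 0 ≤ t ^ 2 * |a| := by positivity
  nlinarith

theorem aux_int {X : Type*} [MeasurableSpace X] (μ : Measure X) [IsProbabilityMeasure μ]
    (f φ : X → ℝ) (hf0 : ∀ x, 0 ≤ f x) (hf : Integrable f μ) (hf1 : ∫ x, f x ∂μ = 1)
    (hl : Integrable (fun x => f x * Real.log (f x)) μ) (h : ℝ) (h0 : 0 ≤ h)
    (hh : ∫ x, f x * Real.log (f x) ∂μ ≤ h)
    (he : Integrable (fun x => Real.exp |φ x|) μ) (he2 : ∫ x, Real.exp |φ x| ∂μ ≤ 2) :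
    ∫ x, (f x - 1) * φ x ∂μ ≤ 2 * Real.sqrt h + h := by
  by_cases hi : Integrable (fun x => (f x - 1) * φ x) μ
  swap
  · rw [integral_undef hi]; positivity
  have key : ∀ t : ℝ, 0 < t → t ≤ 1 → t * ∫ x, (f x - 1) * φ x ∂μ ≤ h + t ^ 2 := by
    intro t ht0 ht1
    have hA : Integrable (fun x => f x * Real.log (f x) - f x) μ := hl.sub hf
    have hB : Integrable (fun x => f x * Real.log (f x) - f x + 1) μ :=
      hA.add (integrable_const 1)
    have hC : Integrable (fun x => Real.exp |φ x| - 1) μ := he.sub (integrable_const 1)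
    have hm := integral_mono (hi.const_mul t) (hB.add (hC.const_mul (t ^ 2)))
      (fun x => aux_pt t (f x) (φ x) ht0 ht1 (hf0 x))
    simp only [Pi.add_apply] at hm
    rw [integral_const_mul, integral_add hB (hC.const_mul (t ^ 2)), integral_const_mul,
      integral_add hA (integrable_const 1), integral_sub hl hf,
      integral_sub he (integrable_const 1), hf1] at hm
    simp at hm
    nlinarith [sq_nonneg t]
  rcases h0.eq_or_lt with rfl | hpos
  · simp only [Real.sqrt_zero, mul_zero, add_zero]
    refine le_of_forall_pos_le_add fun ε hε => ?_
    have hk := key (min ε 1) (lt_min hε one_pos) (min_le_right _ _)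
    have hp : 0 < min ε 1 := lt_min hε one_pos
    have : ∫ x, (f x - 1) * φ x ∂μ ≤ min ε 1 := by
      refine le_of_mul_le_mul_left ?_ hp
      linarith [sq (min ε 1)]
    linarith [min_le_left ε 1]
  · have hs : 0 < Real.sqrt h := Real.sqrt_pos.mpr hpos
    have hsq := Real.mul_self_sqrt h0
    rcases le_total (Real.sqrt h) 1 with h1 | h1
    · have hk := key _ hs h1
      have : ∫ x, (f x - 1) * φ x ∂μ ≤ 2 * Real.sqrt h := by
        refine le_of_mul_le_mul_left ?_ hs
        nlinarith
      linarith
    · have hk := key 1 one_pos le_rfl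
      linarith

/-- `‖dν/dμ − 1‖_ρ^* ≤ 2√(H(ν|μ)) + H(ν|μ)`. -/
theorem dual_orlicz_entropy_bound
    {X : Type*} [TopologicalSpace X] [PolishSpace X] [MeasurableSpace X] [BorelSpace X]
    (μ : Measure X) [IsProbabilityMeasure μ]
    (ν : Measure X) [IsProbabilityMeasure ν]
    (hac : ν ≪ μ)
    (hint : Integrable
      (fun x => (ν.rnDeriv μ x).toReal * Real.log (ν.rnDeriv μ x).toReal) μ) :
    dualOrliczNorm μ (fun x => (ν.rnDeriv μ x).toReal - 1) ≤
      2 * Real.sqrt (relEntropy ν μ).toReal + (relEntropy ν μ).toReal := by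
  have hf : Integrable (fun x => (ν.rnDeriv μ x).toReal) μ := Measure.integrable_toReal_rnDeriv
  have hf1 : ∫ x, (ν.rnDeriv μ x).toReal ∂μ = 1 := by
    rw [Measure.integral_toReal_rnDeriv hac]; simp
  have hh : ∫ x, (ν.rnDeriv μ x).toReal * Real.log (ν.rnDeriv μ x).toReal ∂μ
      ≤ (relEntropy ν μ).toReal := by
    have hi : Integrable (fun x => Real.log (ν.rnDeriv μ x).toReal) ν :=
      (integrable_rnDeriv_smul_iff hac).mp hint
    have he : ∫ x, (ν.rnDeriv μ x).toReal * Real.log (ν.rnDeriv μ x).toReal ∂μ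
        = ∫ x, Real.log (ν.rnDeriv μ x).toReal ∂ν := integral_rnDeriv_smul hac
    rw [relEntropy, if_pos ⟨hac, hi⟩, he, ENNReal.toReal_ofReal']
    exact le_max_left _ _
  refine Real.sSup_le ?_ (by positivity)
  rintro r ⟨φ, hφ, h2, rfl⟩
  have hm : Measurable (fun x => Real.exp |φ x|) :=
    Real.measurable_exp.comp (measurable_norm.comp hφ)
  refine aux_int μ _ φ (fun x => ENNReal.toReal_nonneg) hf hf1 hint _ ENNReal.toReal_nonneg hh ?_ ?_
  · refine ⟨hm.aestronglyMeasurable, ?_⟩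
    rw [hasFiniteIntegral_iff_ofReal (Filter.Eventually.of_forall fun x => (Real.exp_pos _).le)]
    exact h2.trans_lt (by simp)
  · rw [integral_eq_lintegral_of_nonneg_ae
      (Filter.Eventually.of_forall fun x => (Real.exp_pos _).le) hm.aestronglyMeasurable]
    exact ENNReal.toReal_le_of_le_ofReal (by norm_num) (by simpa using h2)

end
end

section
/- Let μ be a probability measure on a Polish space X and χ a nonnegative measurable function with ∫ e^{a_o χ} dμ < ∞ for some a_o > 0. Then the Orlicz norm ‖χ‖_ρ is finite, and for any probability measure ν absolutely continuous with respect to μ whose density f = dν/dμ satisfies ∫ |f| log|f| dμ < ∞, the weighted total variation ∫ χ d|ν − μ| is finite and satisfies ∫ χ d|ν − μ| ≤ ‖χ‖_ρ (2√(H(ν|μ)) + H(ν|μ)), where |ν − μ| denotes the total variation measure of the signed measure ν − μ. -/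
open MeasureTheory ENNReal Set
open scoped NNReal ENNReal

noncomputable section

lemma young_aux {t f : ℝ} (ht : 0 ≤ t) (hf : 0 ≤ f) :
    t * |f - 1| ≤ InformationTheory.klFun f + (Real.exp t - t - 1) := by
  have key : ∀ u : ℝ, u * f ≤ f * Real.log f - f + Real.exp u := by
    intro u
    rcases hf.eq_or_lt with h | h
    · subst h; simpa using (Real.exp_pos u).le
    · have h1 := Real.add_one_le_exp (u - Real.log f)
      rw [Real.exp_sub, Real.exp_log h, le_div_iff₀ h] at h1
      nlinarith
  rw [InformationTheory.klFun_apply]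
  rcases le_total 1 f with h | h
  · rw [abs_of_nonneg (by linarith)]
    have := key t
    nlinarith
  · rw [abs_of_nonpos (by linarith)]
    have h1 := key (-t)
    have h2 := Real.self_le_sinh_iff.2 ht
    rw [Real.sinh_eq] at h2
    nlinarith

lemma exp_conv_aux {s : ℝ} (t : ℝ) (hs0 : 0 ≤ s) (hs1 : s ≤ 1) :
    Real.exp (s * t) ≤ 1 + s * (Real.exp t - 1) := by
  have := convexOn_exp.2 (mem_univ t) (mem_univ 0) hs0 (sub_nonneg.2 hs1) (by ring)
  simp at this
  linarith

lemma exp_sq_aux {s t : ℝ} (hs0 : 0 ≤ s) (hs1 : s ≤ 1) (ht : 0 ≤ t) :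
    Real.exp (s * t) - s * t - 1 ≤ s ^ 2 * (Real.exp t - t - 1) := by
  let g : ℝ → ℝ := fun t => s ^ 2 * (Real.exp t - t - 1) - (Real.exp (s * t) - s * t - 1)
  have hd : ∀ x, HasDerivAt g (s ^ 2 * (Real.exp x - 1) - (Real.exp (s * x) * s - s)) x := by
    intro x
    have h1 : HasDerivAt (fun x : ℝ => s * x) s x := by
      simpa using (hasDerivAt_id x).const_mul s
    exact ((((Real.hasDerivAt_exp x).sub (hasDerivAt_id x)).sub_const 1).const_mul (s ^ 2)).sub
      ((h1.exp.sub h1).sub_const 1)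
  have hm : Monotone g := by
    apply monotone_of_deriv_nonneg
    · exact fun x => (hd x).differentiableAt
    · intro x
      rw [(hd x).deriv]
      have := exp_conv_aux x hs0 hs1
      nlinarith
  have := hm ht
  simp only [g] at this
  simp at this
  linarith

lemma tv_le {X : Type*} [MeasurableSpace X] (μ ν : Measure X)
    [IsProbabilityMeasure μ] [IsProbabilityMeasure ν] (hac : ν ≪ μ) :
    (ν.toSignedMeasure - μ.toSignedMeasure).totalVariation ≤
      μ.withDensity (fun x => ENNReal.ofReal |(ν.rnDeriv μ x).toReal - 1|) := by
  rw [SignedMeasure.totalVariation_eq_variation]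
  apply VectorMeasure.variation_le_of_forall_enorm_le
  intro E hE
  have hi : Integrable (fun x => (ν.rnDeriv μ x).toReal) μ := Measure.integrable_toReal_rnDeriv
  rw [withDensity_apply _ hE, Measure.toSignedMeasure_sub_apply hE,
    ← Measure.setIntegral_toReal_rnDeriv hac]
  have : μ.real E = ∫ x in E, (1 : ℝ) ∂μ := by simp
  rw [this, ← integral_sub hi.integrableOn (integrable_const _)]
  refine (enorm_integral_le_lintegral_enorm _).trans (le_of_eq ?_)
  simp only [Real.enorm_eq_ofReal_abs]

lemma relEntropy_aux {X : Type*} [MeasurableSpace X] (μ ν : Measure X)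
    [IsProbabilityMeasure μ] [IsProbabilityMeasure ν] (hac : ν ≪ μ)
    (hint : Integrable
      (fun x => (ν.rnDeriv μ x).toReal * Real.log (ν.rnDeriv μ x).toReal) μ) :
    Integrable (fun x => InformationTheory.klFun (ν.rnDeriv μ x).toReal) μ ∧
    ∫ x, InformationTheory.klFun (ν.rnDeriv μ x).toReal ∂μ = (relEntropy ν μ).toReal := by
  have hl : Integrable (fun x => Real.log (ν.rnDeriv μ x).toReal) ν :=
    (integrable_rnDeriv_smul_iff hac).1 hint
  have e := InformationTheory.integral_klFun_rnDeriv hac hl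
  refine ⟨(InformationTheory.integrable_klFun_rnDeriv_iff hac).2 hl, ?_⟩
  have e2 : ∫ x, InformationTheory.klFun (ν.rnDeriv μ x).toReal ∂μ
      = ∫ x, Real.log (ν.rnDeriv μ x).toReal ∂ν := by
    rw [e]; simp [llr]
  rw [relEntropy, if_pos ⟨hac, hl⟩, ENNReal.toReal_ofReal, e2]
  rw [← e2]
  exact integral_nonneg fun x => InformationTheory.klFun_nonneg ENNReal.toReal_nonneg

lemma core_aux {X : Type*} [MeasurableSpace X] (μ ν : Measure X)
    [IsProbabilityMeasure μ] [IsProbabilityMeasure ν] (hac : ν ≪ μ)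
    (φ : X → ℝ) (hm : Measurable φ) (h0 : ∀ x, 0 ≤ φ x)
    (hφ : ∫⁻ x, ENNReal.ofReal (Real.exp (φ x)) ∂μ ≤ 2)
    (hint : Integrable
      (fun x => (ν.rnDeriv μ x).toReal * Real.log (ν.rnDeriv μ x).toReal) μ)
    (s : ℝ) (hs0 : 0 < s) (hs1 : s ≤ 1) :
    ∫⁻ x, ENNReal.ofReal (φ x) ∂((ν.toSignedMeasure - μ.toSignedMeasure).totalVariation)
      ≤ ENNReal.ofReal ((relEntropy ν μ).toReal / s + s) := by
  obtain ⟨hk, hkH⟩ := relEntropy_aux μ ν hac hint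
  have he : Integrable (fun x => Real.exp (φ x)) μ := by
    refine ⟨(Real.measurable_exp.comp hm).aestronglyMeasurable, ?_⟩
    rw [hasFiniteIntegral_iff_ofReal (ae_of_all _ fun x => (Real.exp_pos _).le)]
    exact hφ.trans_lt (by simp)
  have he2 : ∫ x, Real.exp (φ x) ∂μ ≤ 2 := by
    rw [integral_eq_lintegral_of_nonneg_ae (ae_of_all _ fun x => (Real.exp_pos _).le) he.1]
    exact ENNReal.toReal_le_of_le_ofReal (by norm_num) (by simpa using hφ)
  have hR : Integrable (fun x => InformationTheory.klFun (ν.rnDeriv μ x).toReal / s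
      + s * (Real.exp (φ x) - 1)) μ :=
    (hk.div_const s).add ((he.sub (integrable_const 1)).const_mul s)
  have hpt : ∀ x, φ x * |(ν.rnDeriv μ x).toReal - 1| ≤
      InformationTheory.klFun (ν.rnDeriv μ x).toReal / s + s * (Real.exp (φ x) - 1) := by
    intro x
    have h1 := young_aux (mul_nonneg hs0.le (h0 x)) (f := (ν.rnDeriv μ x).toReal)
      ENNReal.toReal_nonneg
    have h2 := exp_sq_aux hs0.le hs1 (h0 x)
    have h3 := mul_nonneg (sq_nonneg s) (h0 x)
    rw [← mul_le_mul_iff_right₀ hs0, mul_add, mul_div_cancel₀ _ hs0.ne']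
    nlinarith
  refine (lintegral_mono' (tv_le μ ν hac) le_rfl).trans ?_
  rw [lintegral_withDensity_eq_lintegral_mul _ (by fun_prop) (by fun_prop)]
  have : ∀ x, ((fun x => ENNReal.ofReal |(ν.rnDeriv μ x).toReal - 1|) *
      fun x => ENNReal.ofReal (φ x)) x ≤ ENNReal.ofReal
      (InformationTheory.klFun (ν.rnDeriv μ x).toReal / s + s * (Real.exp (φ x) - 1)) := by
    intro x
    rw [Pi.mul_apply, mul_comm, ← ENNReal.ofReal_mul (h0 x)]
    exact ENNReal.ofReal_le_ofReal (hpt x)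
  refine (lintegral_mono this).trans ?_
  rw [← ofReal_integral_eq_lintegral_ofReal hR
    (ae_of_all _ fun x => (mul_nonneg (h0 x) (abs_nonneg _)).trans (hpt x))]
  apply ENNReal.ofReal_le_ofReal
  have hq : Integrable (fun x => s * (Real.exp (φ x) - 1)) μ :=
    (he.sub (integrable_const 1)).const_mul s
  rw [integral_add (hk.div_const s) hq,
    integral_div, integral_const_mul, integral_sub he (integrable_const 1), hkH]
  simp
  nlinarith

lemma core_aux2 {X : Type*} [MeasurableSpace X] (μ ν : Measure X)
    [IsProbabilityMeasure μ] [IsProbabilityMeasure ν] (hac : ν ≪ μ)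
    (φ : X → ℝ) (hm : Measurable φ) (h0 : ∀ x, 0 ≤ φ x)
    (hφ : ∫⁻ x, ENNReal.ofReal (Real.exp (φ x)) ∂μ ≤ 2)
    (hint : Integrable
      (fun x => (ν.rnDeriv μ x).toReal * Real.log (ν.rnDeriv μ x).toReal) μ) :
    ∫⁻ x, ENNReal.ofReal (φ x) ∂((ν.toSignedMeasure - μ.toSignedMeasure).totalVariation)
      ≤ ENNReal.ofReal (2 * Real.sqrt (relEntropy ν μ).toReal + (relEntropy ν μ).toReal) := by
  have key := core_aux μ ν hac φ hm h0 hφ hint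
  generalize hH : (relEntropy ν μ).toReal = H at *
  have hH0 : 0 ≤ H := hH ▸ ENNReal.toReal_nonneg
  rcases hH0.eq_or_lt with h | h
  · subst h
    simp only [zero_div, zero_add] at key
    simp only [Real.sqrt_zero, mul_zero, add_zero, ENNReal.ofReal_zero]
    refine ENNReal.le_of_forall_pos_le_add fun ε hε _ => ?_
    have h1 := key (min ε 1) (by positivity) (min_le_right _ _)
    refine h1.trans ?_
    rw [zero_add, ← ENNReal.ofReal_coe_nnreal]
    exact ENNReal.ofReal_le_ofReal (min_le_left _ _)
  · rcases le_total H 1 with h1 | h1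
    · refine (key (Real.sqrt H) (Real.sqrt_pos.2 h) (Real.sqrt_le_one.2 h1)).trans ?_
      apply ENNReal.ofReal_le_ofReal
      rw [Real.div_sqrt]; linarith
    · refine (key 1 one_pos le_rfl).trans ?_
      apply ENNReal.ofReal_le_ofReal
      have := Real.one_le_sqrt.2 h1
      rw [div_one]; linarith

/-- Weighted Csiszár–Kullback–Pinsker inequality. -/
theorem weighted_CKP
    {X : Type*} [TopologicalSpace X] [PolishSpace X] [MeasurableSpace X] [BorelSpace X]
    (μ : Measure X) [IsProbabilityMeasure μ]
    (χ : X → ℝ) (hχmeas : Measurable χ) (hχ0 : ∀ x, 0 ≤ χ x)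
    (a₀ : ℝ) (ha₀ : 0 < a₀)
    (hχexp : ∫⁻ x, ENNReal.ofReal (Real.exp (a₀ * χ x)) ∂μ < ⊤)
    (ν : Measure X) [IsProbabilityMeasure ν]
    (hac : ν ≪ μ)
    (hint : Integrable
      (fun x => (ν.rnDeriv μ x).toReal * Real.log (ν.rnDeriv μ x).toReal) μ) :
    orliczNormE μ χ < ⊤ ∧
      (∫⁻ x, ENNReal.ofReal (χ x)
          ∂((ν.toSignedMeasure - μ.toSignedMeasure).totalVariation)) < ⊤ ∧
      ∫ x, χ x ∂((ν.toSignedMeasure - μ.toSignedMeasure).totalVariation) ≤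
        (orliczNormE μ χ).toReal *
          (2 * Real.sqrt (relEntropy ν μ).toReal + (relEntropy ν μ).toReal) := by
  set S := {b : ℝ≥0∞ | 0 < b ∧ ∫⁻ x, ENNReal.ofReal (Real.exp (|χ x| / b.toReal)) ∂μ ≤ 2} with hS
  set T := (ν.toSignedMeasure - μ.toSignedMeasure).totalVariation with hT
  set C := 2 * Real.sqrt (relEntropy ν μ).toReal + (relEntropy ν μ).toReal with hC
  have hC0 : 0 ≤ C := by positivity
  have hN : orliczNormE μ χ = sInf S := rfl
  -- the bound for one admissible finite `b`
  have hb : ∀ b ∈ S, b ≠ ⊤ →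
      ∫⁻ x, ENNReal.ofReal (χ x) ∂T ≤ ENNReal.ofReal (b.toReal * C) := by
    rintro b ⟨hb0, hb2⟩ hbt
    have hbp : 0 < b.toReal := ENNReal.toReal_pos hb0.ne' hbt
    have h1 := core_aux2 μ ν hac (fun x => |χ x| / b.toReal) (by fun_prop)
      (fun x => by positivity) hb2 hint
    have h2 : ∫⁻ x, ENNReal.ofReal (χ x) ∂T
        = ENNReal.ofReal b.toReal * ∫⁻ x, ENNReal.ofReal (|χ x| / b.toReal) ∂T := by
      rw [← lintegral_const_mul _ (by fun_prop)]
      refine lintegral_congr fun x => ?_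
      rw [← ENNReal.ofReal_mul hbp.le, mul_div_cancel₀ _ hbp.ne', abs_of_nonneg (hχ0 x)]
    rw [h2, ENNReal.ofReal_mul hbp.le]
    gcongr
  -- there is a finite admissible `b`
  have hex : ∃ b ∈ S, b ≠ ⊤ := by
    have he : Integrable (fun x => Real.exp (a₀ * χ x)) μ := by
      refine ⟨(Real.measurable_exp.comp (hχmeas.const_mul a₀)).aestronglyMeasurable, ?_⟩
      rwa [hasFiniteIntegral_iff_ofReal (ae_of_all _ fun x => (Real.exp_pos _).le)]
    set K := ∫ x, Real.exp (a₀ * χ x) ∂μ with hK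
    set n := max K 1 with hn
    have hn1 : 1 ≤ n := le_max_right _ _
    have hnK : K ≤ n := le_max_left _ _
    have hn0 : 0 < n := by linarith
    have hd : 0 < n / a₀ := by positivity
    refine ⟨ENNReal.ofReal (n / a₀), ⟨ENNReal.ofReal_pos.2 hd, ?_⟩, ENNReal.ofReal_ne_top⟩
    rw [ENNReal.toReal_ofReal hd.le]
    have hR : Integrable (fun x => 1 + n⁻¹ * (Real.exp (a₀ * χ x) - 1)) μ :=
      (integrable_const 1).add ((he.sub (integrable_const 1)).const_mul n⁻¹)
    have hq : Integrable (fun x => n⁻¹ * (Real.exp (a₀ * χ x) - 1)) μ :=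
      (he.sub (integrable_const 1)).const_mul n⁻¹
    have hpt : ∀ x, Real.exp (|χ x| / (n / a₀)) ≤ 1 + n⁻¹ * (Real.exp (a₀ * χ x) - 1) := by
      intro x
      refine le_trans (le_of_eq ?_) (exp_conv_aux (s := n⁻¹) (a₀ * χ x) (by positivity)
        (inv_le_one_of_one_le₀ hn1))
      rw [abs_of_nonneg (hχ0 x)]
      congr 1
      field_simp
    refine (lintegral_mono fun x => ENNReal.ofReal_le_ofReal (hpt x)).trans ?_
    rw [← ofReal_integral_eq_lintegral_ofReal hR
      (ae_of_all _ fun x => (Real.exp_pos _).le.trans (hpt x)),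
      integral_add (integrable_const 1) hq,
      integral_const_mul, integral_sub he (integrable_const 1)]
    refine ENNReal.ofReal_le_of_le_toReal ?_
    have : n⁻¹ * (K - 1) ≤ 1 := by
      rw [inv_mul_le_iff₀ hn0]; linarith
    simp
    linarith
  obtain ⟨b₀, hb₀, hb₀t⟩ := hex
  have hNt : orliczNormE μ χ < ⊤ := by
    rw [hN]; exact (sInf_le hb₀).trans_lt hb₀t.lt_top
  have hfin : ∫⁻ x, ENNReal.ofReal (χ x) ∂T < ⊤ :=
    (hb b₀ hb₀ hb₀t).trans_lt ENNReal.ofReal_lt_top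
  refine ⟨hNt, hfin, ?_⟩
  rw [integral_eq_lintegral_of_nonneg_ae (ae_of_all _ hχ0) hχmeas.aestronglyMeasurable]
  have hy : ∀ ε > 0, (∫⁻ x, ENNReal.ofReal (χ x) ∂T).toReal
      ≤ ((orliczNormE μ χ).toReal + ε) * C := by
    intro ε hε
    have hlt : sInf S < ENNReal.ofReal ((orliczNormE μ χ).toReal + ε) := by
      rw [← hN, ENNReal.lt_ofReal_iff_toReal_lt hNt.ne]
      linarith
    obtain ⟨b, hbS, hbl⟩ := sInf_lt_iff.1 hlt
    have hbt : b ≠ ⊤ := (hbl.trans ENNReal.ofReal_lt_top).ne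
    rw [ENNReal.lt_ofReal_iff_toReal_lt hbt] at hbl
    refine (ENNReal.toReal_le_of_le_ofReal (by positivity) (hb b hbS hbt)).trans ?_
    gcongr
  have hlim : Filter.Tendsto (fun ε : ℝ => ((orliczNormE μ χ).toReal + ε) * C)
      (nhdsWithin 0 (Ioi 0)) (nhds (((orliczNormE μ χ).toReal + 0) * C)) :=
    (Continuous.tendsto (by fun_prop) 0).mono_left nhdsWithin_le_nhds
  rw [add_zero] at hlim
  exact ge_of_tendsto hlim (by filter_upwards [self_mem_nhdsWithin] with ε hε using hy ε hε)

end
end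

section
/- Let X_1, X_2 be Polish spaces with Borel probability measures μ_1, μ_2, and let c_1 : X_1 × X_1 → [0,∞) and c_2 : X_2 × X_2 → [0,∞) be continuous cost functions with c_1(x,x) = 0 and c_2(x,x) = 0 for all x. Suppose α_1, α_2 are in the class C and the transportation cost inequalities α_1(T_{c_1}(μ_1,ν_1)) ≤ H(ν_1|μ_1) for all Borel probability measures ν_1 on X_1 and α_2(T_{c_2}(μ_2,ν_2)) ≤ H(ν_2|μ_2) for all Borel probability measures ν_2 on X_2 hold. Then for every Borel probability measure ν on X_1 × X_2, (α_1 □ α_2)(T_{c_1⊕c_2}(μ_1 ⊗ μ_2, ν)) ≤ H(ν|μ_1 ⊗ μ_2), where c_1 ⊕ c_2((x_1,x_2),(y_1,y_2)) = c_1(x_1,y_1) + c_2(x_2,y_2). -/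
open MeasureTheory ENNReal Set
open scoped NNReal ENNReal

noncomputable section

/-- Inf-convolution of two functions on `[0,∞)`. -/
def infConvol (α₁ α₂ : ℝ≥0∞ → ℝ≥0∞) (t : ℝ≥0∞) : ℝ≥0∞ :=
  ⨅ (t₁ : ℝ≥0∞) (t₂ : ℝ≥0∞) (_ : t₁ + t₂ = t), α₁ t₁ + α₂ t₂

open ProbabilityTheory InformationTheory Filter Topology

lemma relEntropy_eq_klDiv {X : Type*} [MeasurableSpace X] (ν μ : Measure X)
    [IsProbabilityMeasure ν] [IsProbabilityMeasure μ] : relEntropy ν μ = klDiv ν μ := by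
  classical
  rw [relEntropy, klDiv_def]
  simp only [llr, probReal_univ, add_sub_cancel_right]
  rfl

lemma ClassCFun.jensen_finset {α : ℝ≥0∞ → ℝ≥0∞} (hα : ClassCFun α) (s : Finset ℕ) :
    ∀ (w : ℕ → ℝ≥0) (t : ℕ → ℝ≥0∞), ∑ i ∈ s, w i ≤ 1 →
      α (∑ i ∈ s, (w i : ℝ≥0∞) * t i) ≤ ∑ i ∈ s, (w i : ℝ≥0∞) * α (t i) := by
  classical
  obtain ⟨hmono, h0, hconv, -⟩ := hα
  induction s using Finset.induction_on with
  | empty => intro w t _; simp [h0]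
  | insert a s ha ih =>
    intro w t hw
    rw [Finset.sum_insert ha] at hw
    rw [Finset.sum_insert ha, Finset.sum_insert ha]
    have hwa : w a ≤ 1 := le_trans (by simp) hw
    set q : ℝ≥0 := 1 - w a with hq
    have hpq : w a + q = 1 := add_tsub_cancel_of_le hwa
    have hle : ∑ i ∈ s, w i ≤ q := by
      rw [hq]; exact le_tsub_of_add_le_left hw
    have key : ∀ (v : ℕ → ℝ≥0∞), ∑ i ∈ s, (w i : ℝ≥0∞) * v i
        = (q : ℝ≥0∞) * ∑ i ∈ s, ((w i / q : ℝ≥0) : ℝ≥0∞) * v i := by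
      intro v
      rw [Finset.mul_sum]
      refine Finset.sum_congr rfl fun i hi => ?_
      rw [← mul_assoc, ← ENNReal.coe_mul]
      congr 2
      by_cases hq0 : q = 0
      · have : w i ≤ q := (Finset.single_le_sum (f := w) (fun _ _ => zero_le) hi).trans hle
        rw [hq0] at this ⊢
        simpa using this
      · field_simp
    rw [key t, key (fun i => α (t i))]
    refine (hconv _ _ _ _ hpq).trans ?_
    gcongr
    apply ih
    rw [← Finset.sum_div]
    exact div_le_one_of_le₀ hle zero_le

lemma ClassCFun.le_of_forall_lt {α : ℝ≥0∞ → ℝ≥0∞} (hα : ClassCFun α) {x H : ℝ≥0∞}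
    (h : ∀ y < x, α y ≤ H) : α x ≤ H := by
  obtain ⟨hmono, h0, hconv, hl⟩ := hα
  by_cases hx : x = 0
  · simp [hx, h0]
  · rw [hl x hx]
    exact iSup₂_le h

lemma ClassCFun.jensen {α : ℝ≥0∞ → ℝ≥0∞} (hα : ClassCFun α) (ρ : Measure ℕ)
    [IsProbabilityMeasure ρ] (t : ℕ → ℝ≥0∞) :
    α (∫⁻ i, t i ∂ρ) ≤ ∫⁻ i, α (t i) ∂ρ := by
  refine hα.le_of_forall_lt fun y hy => ?_
  have e : ∀ v : ℕ → ℝ≥0∞, ∫⁻ i, v i ∂ρ = ∑' i, ((ρ {i}).toNNReal : ℝ≥0∞) * v i := by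
    intro v
    rw [lintegral_countable']
    refine tsum_congr fun i => ?_
    rw [ENNReal.coe_toNNReal (measure_ne_top _ _), mul_comm]
  rw [e, ENNReal.tsum_eq_iSup_sum, lt_iSup_iff] at hy
  obtain ⟨s, hs⟩ := hy
  rw [e]
  refine (hα.1 hs.le).trans ((hα.jensen_finset s _ t ?_).trans (ENNReal.sum_le_tsum s))
  rw [← ENNReal.coe_le_coe]
  push_cast
  calc ∑ i ∈ s, ((ρ {i}).toNNReal : ℝ≥0∞) = ∑ i ∈ s, ρ {i} :=
        Finset.sum_congr rfl fun i _ => ENNReal.coe_toNNReal (measure_ne_top _ _)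
    _ = ρ s := by simp
    _ ≤ 1 := prob_le_one

lemma lintegral_klDiv_le {X : Type*} [MeasurableSpace X] [MeasurableSpace.CountablyGenerated X]
    (ρ : Measure ℕ) [IsProbabilityMeasure ρ] (η : Kernel ℕ X) [IsMarkovKernel η]
    (μ : Measure X) [IsProbabilityMeasure μ] :
    ∫⁻ i, klDiv (η i) μ ∂ρ ≤ klDiv (ρ ⊗ₘ η) (ρ ⊗ₘ Kernel.const ℕ μ) := by
  by_cases hac : ρ ⊗ₘ η ≪ ρ ⊗ₘ Kernel.const ℕ μ
  swap; · rw [klDiv_of_not_ac hac]; exact le_top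
  have hac' : ∀ᵐ i ∂ρ, η i ≪ μ := by
    filter_upwards [hac.kernel_of_compProd] with i hi using by simpa using hi
  rw [klDiv_eq_lintegral_klFun_of_ac hac, Measure.lintegral_compProd (by fun_prop)]
  refine lintegral_mono_ae ?_
  have hw : (Kernel.const ℕ μ).withDensity (η.rnDeriv (Kernel.const ℕ μ)) =ᵐ[ρ] η := by
    filter_upwards [hac'] with i hi
    exact Kernel.withDensity_rnDeriv_eq (by simpa using hi)
  have h1 : ρ ⊗ₘ η = (ρ ⊗ₘ Kernel.const ℕ μ).withDensity
      (fun p => η.rnDeriv (Kernel.const ℕ μ) p.1 p.2) := by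
    rw [← Measure.compProd_withDensity (by fun_prop)]
    exact (Measure.compProd_congr hw).symm
  have h2 : (ρ ⊗ₘ η).rnDeriv (ρ ⊗ₘ Kernel.const ℕ μ) =ᵐ[ρ ⊗ₘ Kernel.const ℕ μ]
      (fun p => η.rnDeriv (Kernel.const ℕ μ) p.1 p.2) := by
    conv_lhs => rw [h1]
    exact Measure.rnDeriv_withDensity _ (by fun_prop)
  filter_upwards [hac', Measure.ae_ae_of_ae_compProd h2] with i hi hi2
  rw [klDiv_eq_lintegral_klFun_of_ac hi]
  simp only [Kernel.const_apply] at hi2 ⊢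
  refine (lintegral_congr_ae ?_).le
  have h3 := Kernel.rnDeriv_eq_rnDeriv_measure (κ := η) (η := Kernel.const ℕ μ) (a := i)
  rw [Kernel.const_apply] at h3
  filter_upwards [hi2, h3] with y hy hy3
  rw [hy, hy3]

lemma exists_discretization {X : Type*} [PseudoMetricSpace X] [SecondCountableTopology X]
    [MeasurableSpace X] [OpensMeasurableSpace X] [Nonempty X] {ε : ℝ} (hε : 0 < ε) :
    ∃ a : X → ℕ, Measurable a ∧ ∀ x y, a x = a y → dist x y < ε := by
  classical
  have hex : ∀ x : X, ∃ n, dist x (TopologicalSpace.denseSeq X n) < ε / 2 := by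
    intro x
    obtain ⟨n, hn⟩ := (TopologicalSpace.denseRange_denseSeq X).exists_dist_lt x (half_pos hε)
    exact ⟨n, hn⟩
  refine ⟨fun x => Nat.find (hex x), ?_, ?_⟩
  · apply measurable_find
    intro n
    exact measurableSet_lt (by fun_prop) (by fun_prop)
  · intro x y hxy
    have h1 := Nat.find_spec (hex x)
    have h2 := Nat.find_spec (hex y)
    simp only at hxy
    rw [hxy] at h1
    calc dist x y ≤ _ := dist_triangle_right _ _ _
      _ < ε := by linarith

lemma exists_coupling_le {X : Type*} [MeasurableSpace X] (c : X → X → ℝ) (μ ν : Measure X)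
    [IsProbabilityMeasure μ] [IsProbabilityMeasure ν] {u ε : ℝ≥0∞} (hε : 0 < ε)
    (hu : optTransportCost c μ ν ≤ u) :
    ∃ π : Measure (X × X), (π.map Prod.fst = μ ∧ π.map Prod.snd = ν) ∧ IsProbabilityMeasure π ∧
      ∫⁻ p, ENNReal.ofReal (c p.1 p.2) ∂π ≤ u + ε := by
  by_cases htop : u = ⊤
  · refine ⟨μ.prod ν, ⟨?_, ?_⟩, inferInstance, by simp [htop]⟩
    · simp [Measure.map_fst_prod]
    · simp [Measure.map_snd_prod]
  · have hlt : optTransportCost c μ ν < u + ε :=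
      hu.trans_lt (ENNReal.lt_add_right htop hε.ne')
    rw [optTransportCost] at hlt
    simp only [iInf_lt_iff] at hlt
    obtain ⟨π, hπ, h⟩ := hlt
    refine ⟨π, hπ, ⟨?_⟩, h.le⟩
    have : (π.map Prod.fst) univ = 1 := by rw [hπ.1]; simp
    rwa [Measure.map_apply measurable_fst MeasurableSet.univ] at this

lemma optTransportCost_le_of_tendsto {X : Type*} [TopologicalSpace X] [PolishSpace X]
    [MeasurableSpace X] [BorelSpace X] (c : X → X → ℝ)
    (hc : Continuous fun p : X × X => c p.1 p.2) (hc0 : ∀ x y, 0 ≤ c x y)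
    (μ ν : ProbabilityMeasure X) (νs : ℕ → ProbabilityMeasure X)
    (hν : Tendsto νs atTop (𝓝 ν)) (u : ℕ → ℝ≥0∞) (U : ℝ≥0∞) (hu : Tendsto u atTop (𝓝 U))
    (h : ∀ n, optTransportCost c μ (νs n) ≤ u n) :
    optTransportCost c μ ν ≤ U := by
  let := TopologicalSpace.upgradeIsCompletelyMetrizable X
  choose π hπ hprob hcost using fun n : ℕ =>
    exists_coupling_le c (μ : Measure X) (νs n : Measure X)
      (ε := ENNReal.ofReal (1 / ((n : ℝ) + 1))) (by simp; positivity) (h n)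
  let P : ℕ → ProbabilityMeasure (X × X) := fun n => ⟨π n, hprob n⟩
  have htν : IsTightMeasureSet {((μ : ProbabilityMeasure X) : Measure X) | μ ∈ range νs} := by
    apply isTightMeasureSet_of_isCompact_closure
    have hcpt := hν.isCompact_insert_range
    exact hcpt.closure_of_subset (subset_insert _ _)
  have htP : IsTightMeasureSet {((q : ProbabilityMeasure (X × X)) : Measure (X × X)) | q ∈ range P} := by
    apply IsTightMeasureSet.prodMk
    · refine (isTightMeasureSet_singleton (μ := (μ : Measure X))).subset ?_
      rintro _ ⟨_, ⟨_, ⟨n, rfl⟩, rfl⟩, rfl⟩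
      exact (hπ n).1
    · refine htν.subset ?_
      rintro _ ⟨_, ⟨_, ⟨n, rfl⟩, rfl⟩, rfl⟩
      exact ⟨νs n, ⟨n, rfl⟩, (hπ n).2.symm⟩
  have hcP := isCompact_closure_of_isTightMeasureSet htP
  obtain ⟨Q, -, φ, hφ, hlim⟩ := hcP.tendsto_subseq (x := P) (fun n => subset_closure ⟨n, rfl⟩)
  have hfst : (Q : Measure (X × X)).map Prod.fst = μ := by
    have h1 := ProbabilityMeasure.tendsto_map_of_tendsto_of_continuous _ _ hlim continuous_fst
    have h2 : ∀ n, ((P ∘ φ) n).map (continuous_fst (X := X) (Y := X)).measurable.aemeasurable = μ := by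
      intro n
      apply Subtype.ext
      exact (hπ (φ n)).1
    simp only [h2] at h1
    have h3 := tendsto_nhds_unique h1 tendsto_const_nhds
    exact congrArg (fun r : ProbabilityMeasure X => (r : Measure X)) h3
  have hsnd : (Q : Measure (X × X)).map Prod.snd = ν := by
    have h1 := ProbabilityMeasure.tendsto_map_of_tendsto_of_continuous _ _ hlim continuous_snd
    have h2 : ∀ n, ((P ∘ φ) n).map (continuous_snd (X := X) (Y := X)).measurable.aemeasurable
        = νs (φ n) := by
      intro n
      apply Subtype.ext
      exact (hπ (φ n)).2
    simp only [h2] at h1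
    have h3 := tendsto_nhds_unique h1 (hν.comp hφ.tendsto_atTop)
    exact congrArg (fun r : ProbabilityMeasure X => (r : Measure X)) h3
  have hlsc := lintegral_le_liminf_lintegral_of_forall_isOpen_measure_le_liminf_measure
    (μ := (Q : Measure (X × X))) (μs := fun n => ((P ∘ φ) n : Measure (X × X))) hc
    (fun p => hc0 _ _)
    (fun G hG => ProbabilityMeasure.le_liminf_measure_open_of_tendsto hlim hG)
  refine (iInf₂_le (Q : Measure (X × X)) ⟨hfst, hsnd⟩).trans (hlsc.trans ?_)
  have hlim2 : Tendsto (fun n => u (φ n) + ENNReal.ofReal (1 / ((φ n : ℝ) + 1))) atTop (𝓝 (U + 0)) := by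
    refine Tendsto.add (hu.comp hφ.tendsto_atTop) ?_
    have := ENNReal.tendsto_ofReal (tendsto_one_div_add_atTop_nhds_zero_nat (𝕜 := ℝ))
    rw [ENNReal.ofReal_zero] at this
    exact this.comp hφ.tendsto_atTop
  rw [add_zero] at hlim2
  rw [← hlim2.liminf_eq]
  exact liminf_le_liminf (Eventually.of_forall fun n => hcost (φ n))

lemma optTransportCost_compProd_le {X₁ X₂ : Type*} [MeasurableSpace X₁] [MeasurableSpace X₂]
    (μ₁ : Measure X₁) [IsProbabilityMeasure μ₁] (μ₂ : Measure X₂) [IsProbabilityMeasure μ₂]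
    (c₁ : X₁ → X₁ → ℝ) (c₂ : X₂ → X₂ → ℝ)
    (hc₁ : Measurable fun p : X₁ × X₁ => c₁ p.1 p.2)
    (hc₂ : Measurable fun p : X₂ × X₂ => c₂ p.1 p.2)
    (hc₁0 : ∀ x y, 0 ≤ c₁ x y) (hc₂0 : ∀ x y, 0 ≤ c₂ x y)
    (σ : Measure X₁) [IsProbabilityMeasure σ] (a : X₁ → ℕ) (ha : Measurable a)
    (η : Kernel ℕ X₂) [IsMarkovKernel η] :
    optTransportCost (fun p q : X₁ × X₂ => c₁ p.1 q.1 + c₂ p.2 q.2) (μ₁.prod μ₂)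
        (σ ⊗ₘ η.comap a ha) ≤
      optTransportCost c₁ μ₁ σ + ∫⁻ i, optTransportCost c₂ μ₂ (η i) ∂(σ.map a) := by
  refine ENNReal.le_of_forall_pos_le_add fun ε hε _ => ?_
  have hε2 : (0 : ℝ≥0∞) < (ε : ℝ≥0∞) / 2 := by
    simp [hε.ne']
  obtain ⟨π, hπ, hπp, hπc⟩ := exists_coupling_le c₁ μ₁ σ hε2 le_rfl
  choose p hp hpp hpc using fun i : ℕ => exists_coupling_le c₂ μ₂ (η i) hε2 le_rfl
  let P : Kernel ℕ (X₂ × X₂) := Kernel.ofFunOfCountable p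
  have hP : ∀ i, P i = p i := fun i => rfl
  have : IsMarkovKernel P := ⟨hpp⟩
  let K : Kernel (X₁ × X₁) (X₂ × X₂) := P.comap (fun z => a z.2) (ha.comp measurable_snd)
  have hK : ∀ z, K z = p (a z.2) := fun z => rfl
  have : IsMarkovKernel K := by dsimp only [K]; infer_instance
  let T : (X₁ × X₁) × (X₂ × X₂) → (X₁ × X₂) × (X₁ × X₂) :=
    fun z => ((z.1.1, z.2.1), (z.1.2, z.2.2))
  have hT : Measurable T := by dsimp only [T]; fun_prop
  have hσa : IsProbabilityMeasure (σ.map a) := Measure.isProbabilityMeasure_map ha.aemeasurable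
  have m1 : ((π ⊗ₘ K).map T).map Prod.fst = μ₁.prod μ₂ := by
    refine Measure.ext_of_lintegral _ fun f hf => ?_
    rw [lintegral_map hf measurable_fst, lintegral_map (by fun_prop) hT,
      Measure.lintegral_compProd (by dsimp only [T]; fun_prop), lintegral_prod _ hf.aemeasurable]
    simp only [T, hK]
    have : ∀ z : X₁ × X₁, ∫⁻ w, f (z.1, w.1) ∂(p (a z.2)) = ∫⁻ w, f (z.1, w) ∂μ₂ := by
      intro z
      conv_rhs => rw [← (hp (a z.2)).1]
      rw [lintegral_map (by fun_prop) measurable_fst]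
    simp only [this]
    conv_rhs => rw [← hπ.1]
    rw [lintegral_map hf.lintegral_prod_right' measurable_fst]
  have m2 : ((π ⊗ₘ K).map T).map Prod.snd = σ ⊗ₘ η.comap a ha := by
    refine Measure.ext_of_lintegral _ fun f hf => ?_
    rw [lintegral_map hf measurable_snd, lintegral_map (by fun_prop) hT,
      Measure.lintegral_compProd (by dsimp only [T]; fun_prop), Measure.lintegral_compProd hf]
    simp only [T, hK, Kernel.comap_apply]
    have : ∀ z : X₁ × X₁, ∫⁻ w, f (z.2, w.2) ∂(p (a z.2)) = ∫⁻ w, f (z.2, w) ∂(η (a z.2)) := by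
      intro z
      conv_rhs => rw [← (hp (a z.2)).2]
      rw [lintegral_map (by fun_prop) measurable_snd]
    simp only [this]
    conv_rhs => rw [← hπ.2]
    rw [lintegral_map _ measurable_snd]
    exact Measurable.lintegral_kernel_prod_right (κ := η.comap a ha) hf
  refine (iInf₂_le ((π ⊗ₘ K).map T) ⟨m1, m2⟩).trans ?_
  have hm1 : Measurable fun p : X₁ × X₁ => ENNReal.ofReal (c₁ p.1 p.2) := hc₁.ennreal_ofReal
  have hm2 : Measurable fun p : X₂ × X₂ => ENNReal.ofReal (c₂ p.1 p.2) := hc₂.ennreal_ofReal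
  have e1 : ∀ q : (X₁ × X₂) × (X₁ × X₂),
      ENNReal.ofReal (c₁ q.1.1 q.2.1 + c₂ q.1.2 q.2.2)
        = ENNReal.ofReal (c₁ q.1.1 q.2.1) + ENNReal.ofReal (c₂ q.1.2 q.2.2) :=
    fun q => ENNReal.ofReal_add (hc₁0 _ _) (hc₂0 _ _)
  have hm1' : Measurable fun q : (X₁ × X₂) × (X₁ × X₂) => ENNReal.ofReal (c₁ q.1.1 q.2.1) :=
    hm1.comp (g := fun p : X₁ × X₁ => ENNReal.ofReal (c₁ p.1 p.2))
      (f := fun q : (X₁ × X₂) × (X₁ × X₂) => (q.1.1, q.2.1)) (by fun_prop)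
  have hm2' : Measurable fun q : (X₁ × X₂) × (X₁ × X₂) => ENNReal.ofReal (c₂ q.1.2 q.2.2) :=
    hm2.comp (g := fun p : X₂ × X₂ => ENNReal.ofReal (c₂ p.1 p.2))
      (f := fun q : (X₁ × X₂) × (X₁ × X₂) => (q.1.2, q.2.2)) (by fun_prop)
  simp only [e1]
  rw [lintegral_add_left hm1', lintegral_map hm1' hT, lintegral_map hm2' hT,
    Measure.lintegral_compProd (f := fun z => ENNReal.ofReal (c₁ (T z).1.1 (T z).2.1))
      (hm1'.comp hT),
    Measure.lintegral_compProd (f := fun z => ENNReal.ofReal (c₂ (T z).1.2 (T z).2.2))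
      (hm2'.comp hT)]
  simp only [T, hK, lintegral_const, measure_univ, mul_one]
  have e2 : ∫⁻ z : X₁ × X₁, ∫⁻ w, ENNReal.ofReal (c₂ w.1 w.2) ∂(p (a z.2)) ∂π
      = ∫⁻ i, ∫⁻ w, ENNReal.ofReal (c₂ w.1 w.2) ∂(p i) ∂(σ.map a) := by
    rw [lintegral_map (measurable_of_countable _) ha]
    conv_rhs => rw [← hπ.2]
    rw [lintegral_map _ measurable_snd]
    exact (measurable_of_countable fun i => ∫⁻ w, ENNReal.ofReal (c₂ w.1 w.2) ∂(p i)).comp ha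
  rw [e2]
  calc _ ≤ (optTransportCost c₁ μ₁ σ + ε / 2)
        + ∫⁻ i, (optTransportCost c₂ μ₂ (η i) + ε / 2) ∂(σ.map a) := by
        gcongr with i
        exact hpc i
    _ = _ := by
        rw [lintegral_add_right _ measurable_const]
        simp only [lintegral_const, measure_univ, mul_one]
        rw [add_add_add_comm, ENNReal.add_halves]

lemma exists_approx {X₁ X₂ : Type*}
    [MetricSpace X₁] [CompleteSpace X₁] [SecondCountableTopology X₁]
    [MeasurableSpace X₁] [BorelSpace X₁]
    [MetricSpace X₂] [CompleteSpace X₂] [SecondCountableTopology X₂]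
    [MeasurableSpace X₂] [BorelSpace X₂]
    (μ₁ : Measure X₁) [IsProbabilityMeasure μ₁]
    (μ₂ : Measure X₂) [IsProbabilityMeasure μ₂]
    (c₁ : X₁ → X₁ → ℝ) (c₂ : X₂ → X₂ → ℝ)
    (hc₁ : Measurable fun p : X₁ × X₁ => c₁ p.1 p.2)
    (hc₂ : Measurable fun p : X₂ × X₂ => c₂ p.1 p.2)
    (hc₁0 : ∀ x y, 0 ≤ c₁ x y) (hc₂0 : ∀ x y, 0 ≤ c₂ x y)
    (α₁ α₂ : ℝ≥0∞ → ℝ≥0∞) (hα₂ : ClassCFun α₂)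
    (hTCI₁ : ∀ ν₁ : Measure X₁, IsProbabilityMeasure ν₁ →
      α₁ (optTransportCost c₁ μ₁ ν₁) ≤ relEntropy ν₁ μ₁)
    (hTCI₂ : ∀ ν₂ : Measure X₂, IsProbabilityMeasure ν₂ →
      α₂ (optTransportCost c₂ μ₂ ν₂) ≤ relEntropy ν₂ μ₂)
    (ν : Measure (X₁ × X₂)) [IsProbabilityMeasure ν] (hν : ν ≪ μ₁.prod μ₂)
    {ε : ℝ} (hε : 0 < ε) :
    ∃ (ν' : ProbabilityMeasure (X₁ × X₂)) (s t : ℝ≥0∞),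
      optTransportCost (fun p q : X₁ × X₂ => c₁ p.1 q.1 + c₂ p.2 q.2) (μ₁.prod μ₂) ν' ≤ s + t ∧
      α₁ s + α₂ t ≤ klDiv ν (μ₁.prod μ₂) ∧
      ∀ (f : X₁ × X₂ → ℝ) (L : ℝ≥0), (∃ C, ∀ x y, dist (f x) (f y) ≤ C) → LipschitzWith L f →
        dist (∫ z, f z ∂(ν' : Measure (X₁ × X₂))) (∫ z, f z ∂ν) ≤ L * ε := by
  have : Nonempty X₁ := μ₁.nonempty_of_neZero
  have : Nonempty X₂ := μ₂.nonempty_of_neZero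
  obtain ⟨a, ha, hdist⟩ := exists_discretization (X := X₁) hε
  -- the conditional laws of `μ₁` on the cells
  let lam : Kernel ℕ X₁ := condDistrib id a μ₁
  have hlamM : IsMarkovKernel lam := by dsimp only [lam]; infer_instance
  let ρ0 : Measure ℕ := μ₁.map a
  have hρ0 : IsProbabilityMeasure ρ0 := Measure.isProbabilityMeasure_map ha.aemeasurable
  have hlam : ρ0 ⊗ₘ lam = μ₁.map (fun x => (a x, x)) :=
    compProd_map_condDistrib aemeasurable_id
  have hlamc : lam ∘ₘ ρ0 = μ₁ := by
    have := condDistrib_comp_map (μ := μ₁) ha.aemeasurable (Y := id) aemeasurable_id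
    simpa using this
  have hsupp0 : ∀ᵐ i ∂ρ0, ∀ᵐ x ∂(lam i), a x = i := by
    refine Measure.ae_ae_of_ae_compProd (p := fun z : ℕ × X₁ => a z.2 = z.1) ?_
    have hset : MeasurableSet {z : ℕ × X₁ | a z.2 = z.1} :=
      measurableSet_eq_fun (ha.comp measurable_snd) measurable_fst
    have hpm : Measurable (fun x : X₁ => (a x, x)) := by fun_prop
    rw [hlam, ae_map_iff hpm.aemeasurable hset]
    simp
  -- the discretized measure
  let D : X₁ × X₂ → ℕ × X₂ := fun z => (a z.1, z.2)
  have hD : Measurable D := by dsimp only [D]; fun_prop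
  let m : Measure (ℕ × X₂) := ν.map D
  have hm : IsProbabilityMeasure m := Measure.isProbabilityMeasure_map hD.aemeasurable
  let ρ : Measure ℕ := m.fst
  have hρ : IsProbabilityMeasure ρ := by dsimp only [ρ]; infer_instance
  let η : Kernel ℕ X₂ := m.condKernel
  have hη : IsMarkovKernel η := by dsimp only [η]; infer_instance
  have hmη : ρ ⊗ₘ η = m := m.disintegrate m.condKernel
  have hmap : (μ₁.prod μ₂).map D = ρ0 ⊗ₘ Kernel.const ℕ μ₂ := by
    rw [Measure.compProd_const]
    have := Measure.map_prod_map μ₁ μ₂ ha measurable_id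
    rw [Measure.map_id] at this
    exact this.symm
  have hρac : ρ ≪ ρ0 := by
    have h1 : m ≪ ρ0 ⊗ₘ Kernel.const ℕ μ₂ := by
      rw [← hmap]; exact hν.map hD
    rw [← hmη] at h1
    exact (Measure.absolutelyContinuous_compProd_iff.mp h1).1
  have hsupp : ∀ᵐ i ∂ρ, ∀ᵐ x ∂(lam i), a x = i := hρac.ae_le hsupp0
  have hkl : klDiv ρ ρ0 + ∫⁻ i, klDiv (η i) μ₂ ∂ρ ≤ klDiv ν (μ₁.prod μ₂) := by
    calc _ ≤ klDiv ρ ρ0 + klDiv (ρ ⊗ₘ η) (ρ ⊗ₘ Kernel.const ℕ μ₂) := by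
          gcongr; exact lintegral_klDiv_le _ _ _
      _ = klDiv (ρ ⊗ₘ η) (ρ0 ⊗ₘ Kernel.const ℕ μ₂) := (klDiv_compProd_eq_add _ _ _ _).symm
      _ = klDiv (ν.map D) ((μ₁.prod μ₂).map D) := by rw [hmη, hmap]
      _ ≤ _ := klDiv_map_le _ _ hD
  let σ : Measure X₁ := lam ∘ₘ ρ
  have hσ : IsProbabilityMeasure σ := by dsimp only [σ]; infer_instance
  have hσint : ∀ g : X₁ → ℝ≥0∞, Measurable g → ∫⁻ x, g x ∂σ = ∫⁻ i, ∫⁻ x, g x ∂(lam i) ∂ρ :=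
    fun g hg => Measure.lintegral_bind lam.measurable.aemeasurable hg.aemeasurable
  have hσρ : σ.map a = ρ := by
    refine Measure.ext_of_lintegral _ fun f hf => ?_
    rw [lintegral_map hf ha, hσint (fun x => f (a x)) (hf.comp ha)]
    refine lintegral_congr_ae ?_
    filter_upwards [hsupp] with i hi
    have : ∫⁻ x, f (a x) ∂(lam i) = ∫⁻ x, f i ∂(lam i) := by
      refine lintegral_congr_ae ?_
      filter_upwards [hi] with x hx
      rw [hx]
    rw [this]; simp
  have hν'p : IsProbabilityMeasure (σ ⊗ₘ η.comap a ha) := inferInstance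
  let K : Kernel (X₁ × X₂) X₁ := lam.comap (fun z => a z.1) (ha.comp measurable_fst)
  have hKM : IsMarkovKernel K := by dsimp only [K]; infer_instance
  have hK : ∀ z, K z = lam (a z.1) := fun z => rfl
  have hν'eq : σ ⊗ₘ η.comap a ha = (ν ⊗ₘ K).map (fun z => (z.2, z.1.2)) := by
    refine Measure.ext_of_lintegral _ fun f hf => ?_
    rw [lintegral_map hf (by fun_prop), Measure.lintegral_compProd hf,
      Measure.lintegral_compProd (by fun_prop)]
    rw [hσint (fun x => ∫⁻ y, f (x, y) ∂((η.comap a ha) x))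
      (Measurable.lintegral_kernel_prod_right' (κ := η.comap a ha) hf)]
    simp only [hK, Kernel.comap_apply]
    have hmeas : Measurable fun w : ℕ × X₂ => ∫⁻ x, f (x, w.2) ∂(lam w.1) :=
      Measurable.lintegral_kernel_prod_right (κ := lam.comap Prod.fst measurable_fst)
        (f := fun (w : ℕ × X₂) (x : X₁) => f (x, w.2)) (by fun_prop)
    have e1 : ∫⁻ z, ∫⁻ x, f (x, z.2) ∂(lam (a z.1)) ∂ν
        = ∫⁻ w : ℕ × X₂, ∫⁻ x, f (x, w.2) ∂(lam w.1) ∂m := by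
      rw [lintegral_map hmeas hD]
    rw [e1, ← hmη, Measure.lintegral_compProd hmeas]
    refine lintegral_congr_ae ?_
    filter_upwards [hsupp] with i hi
    have e2 : ∫⁻ x, ∫⁻ y, f (x, y) ∂(η (a x)) ∂(lam i) = ∫⁻ x, ∫⁻ y, f (x, y) ∂(η i) ∂(lam i) := by
      refine lintegral_congr_ae ?_
      filter_upwards [hi] with x hx
      rw [hx]
    rw [e2]
    exact lintegral_lintegral_swap hf.aemeasurable
  refine ⟨⟨σ ⊗ₘ η.comap a ha, hν'p⟩, optTransportCost c₁ μ₁ σ,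
    ∫⁻ i, optTransportCost c₂ μ₂ (η i) ∂ρ, ?_, ?_, ?_⟩
  · have := optTransportCost_compProd_le μ₁ μ₂ c₁ c₂ hc₁ hc₂ hc₁0 hc₂0 σ a ha η
    rwa [hσρ] at this
  · refine le_trans ?_ hkl
    refine add_le_add ?_ ?_
    · refine (hTCI₁ σ hσ).trans ?_
      rw [relEntropy_eq_klDiv]
      conv_lhs => rw [← hlamc]
      exact klDiv_comp_right_le ρ ρ0 lam
    · refine (hα₂.jensen ρ _).trans (lintegral_mono fun i => ?_)
      refine (hTCI₂ (η i) inferInstance).trans ?_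
      rw [relEntropy_eq_klDiv]
  · rintro f L ⟨C, hC⟩ hL
    have hfm : Measurable f := hL.continuous.measurable
    have hfint : ∀ (Ω : Type _) [MeasurableSpace Ω] (q : Measure Ω) [IsProbabilityMeasure q]
        (g : Ω → X₁ × X₂), Measurable g → Integrable (fun w => f (g w)) q := by
      intro Ω _ q _ g hg
      have z0 : X₁ × X₂ := Classical.arbitrary _
      refine Integrable.of_bound (hfm.comp hg).aestronglyMeasurable (‖f z0‖ + C)
        (Eventually.of_forall fun w => ?_)
      have h1 := hC (g w) z0
      rw [dist_eq_norm] at h1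
      have h2 := norm_le_norm_add_norm_sub (f z0) (f (g w))
      rw [norm_sub_rev] at h2
      linarith
    have i1 : ∫ z, f z ∂(σ ⊗ₘ η.comap a ha) = ∫ z, f (z.2, z.1.2) ∂(ν ⊗ₘ K) := by
      rw [hν'eq, integral_map (by fun_prop) hfm.aestronglyMeasurable]
    have i2 : ∫ z, f z ∂ν = ∫ z, f z.1 ∂(ν ⊗ₘ K) := by
      have : (ν ⊗ₘ K).map Prod.fst = ν := Measure.fst_compProd ν K
      conv_lhs => rw [← this]
      rw [integral_map (by fun_prop) hfm.aestronglyMeasurable]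
    have hclose : ∀ᵐ z ∂(ν ⊗ₘ K), a z.2 = a z.1.1 := by
      refine Measure.ae_compProd_of_ae_ae (μ := ν) (κ := K) (p := fun z => a z.2 = a z.1.1)
        (measurableSet_eq_fun (by fun_prop) (by fun_prop)) ?_
      have h1 : ∀ᵐ w ∂m, ∀ᵐ x ∂(lam w.1), a x = w.1 := by
        have : ∀ᵐ i ∂(m.map Prod.fst), ∀ᵐ x ∂(lam i), a x = i := hsupp
        exact ae_of_ae_map measurable_fst.aemeasurable this
      exact ae_of_ae_map hD.aemeasurable h1
    change dist (∫ z, f z ∂(σ ⊗ₘ η.comap a ha)) (∫ z, f z ∂ν) ≤ L * ε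
    rw [i1, i2, dist_eq_norm, ← integral_sub (hfint _ _ _ (by fun_prop)) (hfint _ _ _ (by fun_prop))]
    have := norm_integral_le_of_norm_le_const (μ := ν ⊗ₘ K) (C := L * ε)
      (f := fun z => f (z.2, z.1.2) - f z.1) ?_
    · simpa using this
    · filter_upwards [hclose] with z hz
      rw [← dist_eq_norm]
      refine (hL.dist_le_mul _ _).trans ?_
      gcongr
      rw [Prod.dist_eq]
      simp [(hdist _ _ hz).le]

/-- Tensorization of convex transportation cost inequalities. -/
theorem tensorization_TCI
    {X₁ X₂ : Type*}
    [TopologicalSpace X₁] [PolishSpace X₁] [MeasurableSpace X₁] [BorelSpace X₁]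
    [TopologicalSpace X₂] [PolishSpace X₂] [MeasurableSpace X₂] [BorelSpace X₂]
    (μ₁ : Measure X₁) [IsProbabilityMeasure μ₁]
    (μ₂ : Measure X₂) [IsProbabilityMeasure μ₂]
    (c₁ : X₁ → X₁ → ℝ) (c₂ : X₂ → X₂ → ℝ)
    (hc₁ : Continuous fun p : X₁ × X₁ => c₁ p.1 p.2)
    (hc₂ : Continuous fun p : X₂ × X₂ => c₂ p.1 p.2)
    (hc₁0 : ∀ x y, 0 ≤ c₁ x y) (hc₂0 : ∀ x y, 0 ≤ c₂ x y)
    (hc₁diag : ∀ x, c₁ x x = 0) (hc₂diag : ∀ x, c₂ x x = 0)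
    (α₁ α₂ : ℝ≥0∞ → ℝ≥0∞) (hα₁ : ClassCFun α₁) (hα₂ : ClassCFun α₂)
    (hTCI₁ : ∀ ν₁ : Measure X₁, IsProbabilityMeasure ν₁ →
      α₁ (optTransportCost c₁ μ₁ ν₁) ≤ relEntropy ν₁ μ₁)
    (hTCI₂ : ∀ ν₂ : Measure X₂, IsProbabilityMeasure ν₂ →
      α₂ (optTransportCost c₂ μ₂ ν₂) ≤ relEntropy ν₂ μ₂) :
    ∀ ν : Measure (X₁ × X₂), IsProbabilityMeasure ν →
      infConvol α₁ α₂
          (optTransportCost (fun p q => c₁ p.1 q.1 + c₂ p.2 q.2) (μ₁.prod μ₂) ν) ≤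
        relEntropy ν (μ₁.prod μ₂) := by
  intro ν hν
  rw [relEntropy_eq_klDiv]
  by_cases hac : ν ≪ μ₁.prod μ₂
  swap; · rw [klDiv_of_not_ac hac]; exact le_top
  let := TopologicalSpace.upgradeIsCompletelyMetrizable X₁
  let := TopologicalSpace.upgradeIsCompletelyMetrizable X₂
  choose νs s t hT hα hf using fun n : ℕ =>
    exists_approx μ₁ μ₂ c₁ c₂ hc₁.measurable hc₂.measurable hc₁0 hc₂0 α₁ α₂ hα₂ hTCI₁ hTCI₂ ν hac
      (ε := 1 / ((n : ℝ) + 1)) (by positivity)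
  let νp : ProbabilityMeasure (X₁ × X₂) := ⟨ν, hν⟩
  let μp : ProbabilityMeasure (X₁ × X₂) := ⟨μ₁.prod μ₂, inferInstance⟩
  have hlim : Tendsto νs atTop (𝓝 νp) := by
    rw [tendsto_iff_forall_lipschitz_integral_tendsto]
    rintro f hC ⟨L, hL⟩
    rw [tendsto_iff_dist_tendsto_zero]
    refine squeeze_zero (fun _ => dist_nonneg) (fun n => hf n f L hC hL) ?_
    have := (tendsto_one_div_add_atTop_nhds_zero_nat (𝕜 := ℝ)).const_mul (L : ℝ)
    simpa using this
  obtain ⟨⟨S, T⟩, -, φ, hφ, hST⟩ := (isCompact_univ (X := ℝ≥0∞ × ℝ≥0∞)).tendsto_subseq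
    (x := fun n => (s n, t n)) (fun _ => mem_univ _)
  have hS : Tendsto (fun n => s (φ n)) atTop (𝓝 S) := (continuous_fst.tendsto _).comp hST
  have hT' : Tendsto (fun n => t (φ n)) atTop (𝓝 T) := (continuous_snd.tendsto _).comp hST
  have hle : optTransportCost (fun p q : X₁ × X₂ => c₁ p.1 q.1 + c₂ p.2 q.2) (μ₁.prod μ₂) ν
      ≤ S + T := by
    refine optTransportCost_le_of_tendsto (fun p q : X₁ × X₂ => c₁ p.1 q.1 + c₂ p.2 q.2) ?_
      (fun _ _ => add_nonneg (hc₁0 _ _) (hc₂0 _ _)) μp νp (fun n => νs (φ n))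
      (hlim.comp hφ.tendsto_atTop) (fun n => s (φ n) + t (φ n)) _ (hS.add hT') (fun n => hT (φ n))
    exact (hc₁.comp (f := fun q : (X₁ × X₂) × (X₁ × X₂) => (q.1.1, q.2.1)) (by fun_prop)).add
      (hc₂.comp (f := fun q : (X₁ × X₂) × (X₁ × X₂) => (q.1.2, q.2.2)) (by fun_prop))
  have hα12 : α₁ S + α₂ T ≤ klDiv ν (μ₁.prod μ₂) := by
    have key : ∀ x < S, ∀ y < T, α₁ x + α₂ y ≤ klDiv ν (μ₁.prod μ₂) := by
      intro x hx y hy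
      obtain ⟨n, h1, h2⟩ := ((hS.eventually_const_lt hx).and (hT'.eventually_const_lt hy)).exists
      exact (add_le_add (hα₁.1 h1.le) (hα₂.1 h2.le)).trans (hα (φ n))
    have k2 : ∀ x < S, α₁ x + α₂ T ≤ klDiv ν (μ₁.prod μ₂) := by
      intro x hx
      by_cases hT0 : T = 0
      · rw [hT0, hα₂.2.1, add_zero]
        obtain ⟨n, h1⟩ := (hS.eventually_const_lt hx).exists
        exact (hα₁.1 h1.le).trans (le_self_add.trans (hα (φ n)))
      · rw [hα₂.2.2.2 T hT0, ENNReal.add_biSup' (p := fun y => y ∈ Iio T)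
          ⟨0, pos_iff_ne_zero.mpr hT0⟩]
        exact iSup₂_le fun y hy => key x hx y hy
    by_cases hS0 : S = 0
    · rw [hS0, hα₁.2.1, zero_add]
      refine hα₂.le_of_forall_lt fun y hy => ?_
      obtain ⟨n, h1⟩ := (hT'.eventually_const_lt hy).exists
      exact (hα₂.1 h1.le).trans (le_add_self.trans (hα (φ n)))
    · rw [hα₁.2.2.2 S hS0, ENNReal.biSup_add' (p := fun y => y ∈ Iio S)
          ⟨0, pos_iff_ne_zero.mpr hS0⟩]
      exact iSup₂_le fun x hx => k2 x hx
  set W := optTransportCost (fun p q : X₁ × X₂ => c₁ p.1 q.1 + c₂ p.2 q.2) (μ₁.prod μ₂) ν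
  have hsplit : min W S + (W - S) = W := by
    rw [add_comm]; exact tsub_add_min
  refine (iInf_le_of_le (min W S) (iInf₂_le (W - S) hsplit)).trans (le_trans ?_ hα12)
  exact add_le_add (hα₁.1 (min_le_right _ _)) (hα₂.1 (tsub_le_iff_left.mpr hle))

end
end

section
/- Let (X,d) be a Polish metric space, μ a Borel probability measure on X, and α a function in the class C. Say that the transportation cost inequality α(T_d(μ,ν)) ≤ H(ν|μ) (for all Borel probability measures ν on X) has the dimension-free tensorization property if for every n ≥ 1 and every Borel probability measure ζ on X^n one has α(T_{d^{⊕n}}(μ^{⊗n}, ζ)) ≤ H(ζ|μ^{⊗n}), where d^{⊕n}((x_1,…,x_n),(y_1,…,y_n)) = d(x_1,y_1) + ⋯ + d(x_n,y_n). Then this inequality holds and has the dimension-free tensorization property if and only if α is identically zero or μ is a Dirac mass. -/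
open MeasureTheory ENNReal Set
open scoped NNReal ENNReal

noncomputable section

lemma eq_dirac_of_ae_aux {Y : Type*} [MeasurableSpace Y] [MeasurableSingletonClass Y]
    (ν : Measure Y) [IsProbabilityMeasure ν] (y : Y) (h : ∀ᵐ x ∂ν, x = y) :
    ν = Measure.dirac y := by
  have h1 : ν {y}ᶜ = 0 := h
  have h2 : ν {y} = 1 := (prob_compl_eq_zero_iff (measurableSet_singleton y)).1 h1
  have h3 : ν.restrict {y} = ν := Measure.restrict_eq_self_of_ae_mem h
  rw [← h3, Measure.restrict_singleton, h2, one_smul]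

lemma dirac_case_aux {Y : Type*} [MeasurableSpace Y] [MeasurableSingletonClass Y]
    (c : Y → Y → ℝ) (y : Y) (hc : c y y = 0) (α : ℝ≥0∞ → ℝ≥0∞) (hα : α 0 = 0)
    (ν : Measure Y) [IsProbabilityMeasure ν] :
    α (optTransportCost c (Measure.dirac y) ν) ≤ relEntropy ν (Measure.dirac y) := by
  unfold relEntropy
  split_ifs with h
  · have hν : ν = Measure.dirac y := by
      apply eq_dirac_of_ae_aux
      apply h.1.ae_le
      rw [ae_dirac_eq]
      exact Filter.eventually_pure.2 rfl
    have : optTransportCost c (Measure.dirac y) ν = 0 := by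
      rw [← nonpos_iff_eq_zero]
      unfold optTransportCost
      refine (iInf₂_le (Measure.dirac (y, y)) ⟨?_, ?_⟩).trans ?_
      · rw [lintegral_dirac]; simp [hc]
      · rw [Measure.map_dirac' measurable_fst]
      · rw [Measure.map_dirac' measurable_snd, hν]
    rw [this, hα]; exact zero_le
  · exact le_top

lemma pi_dirac_aux {X : Type*} [MeasurableSpace X] (n : ℕ) (x₀ : X) :
    Measure.pi (fun _ : Fin n => Measure.dirac x₀) = Measure.dirac (fun _ => x₀) := by
  refine Measure.pi_eq fun s hs => ?_
  rw [Measure.dirac_apply' _ (MeasurableSet.univ_pi hs)]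
  simp_rw [fun i => Measure.dirac_apply' x₀ (hs i)]
  by_cases h : ∀ i, x₀ ∈ s i
  · rw [Set.indicator_of_mem (by simpa using h)]
    simp [h]
  · rw [Set.indicator_of_notMem (by simpa using h)]
    push Not at h
    obtain ⟨i, hi⟩ := h
    symm
    exact Finset.prod_eq_zero (Finset.mem_univ i) (by simp [hi])

lemma alpha_zero_aux (α : ℝ≥0∞ → ℝ≥0∞) (hα : ClassCFun α)
    (h : ∀ K : ℝ, ∃ s : ℝ, K ≤ s ∧ α (ENNReal.ofReal s) ≤ 1) (t : ℝ≥0∞) : α t = 0 := by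
  obtain ⟨hm, h0, hc, hl⟩ := hα
  have key : ∀ t : ℝ≥0∞, t ≠ ⊤ → α t = 0 := by
    intro t ht
    have h1 : ∀ k : ℕ, α t ≤ ((k : ℝ≥0∞) + 1)⁻¹ := by
      intro k
      obtain ⟨s, hs, hs1⟩ := h ((k + 1) * t.toReal)
      set p : ℝ≥0 := ((k : ℝ≥0) + 1)⁻¹ with hp
      have hp1 : p ≤ 1 := by
        rw [hp]; apply inv_le_one_of_one_le₀; simp
      have hpk : (p : ℝ≥0∞) = ((k : ℝ≥0∞) + 1)⁻¹ := by
        rw [hp, ENNReal.coe_inv (by positivity)]; simp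
      have := hc (ENNReal.ofReal s) 0 p (1 - p) (add_tsub_cancel_of_le hp1)
      simp only [h0, mul_zero, add_zero] at this
      have h2 : t ≤ (p : ℝ≥0∞) * ENNReal.ofReal s := by
        have e : ENNReal.ofReal ((k + 1) * t.toReal) = ((k : ℝ≥0∞) + 1) * t := by
          rw [ENNReal.ofReal_mul (by positivity), ENNReal.ofReal_toReal ht,
            ENNReal.ofReal_add (by positivity) (by positivity)]
          simp
        have := ENNReal.ofReal_le_ofReal hs
        rw [e] at this
        calc t = (p : ℝ≥0∞) * (((k : ℝ≥0∞) + 1) * t) := by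
              rw [← mul_assoc, hpk, ENNReal.inv_mul_cancel (by simp) (by finiteness), one_mul]
          _ ≤ _ := by gcongr
      calc α t ≤ _ := hm h2
        _ ≤ _ := this
        _ ≤ (p : ℝ≥0∞) * 1 := by gcongr
        _ = _ := by rw [mul_one, hpk]
    by_contra hne
    obtain ⟨k, hk⟩ := ENNReal.exists_inv_nat_lt hne
    have := h1 k
    refine absurd (this.trans ?_) (not_le.2 hk)
    rw [ENNReal.inv_le_inv]
    exact le_self_add
  by_cases ht : t = ⊤
  · subst ht
    rw [hl ⊤ (by simp)]
    simp only [ENNReal.iSup_eq_zero]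
    intro y hy
    exact key y (ne_of_lt hy)
  · exact key t ht

lemma pi_withDensity_aux {X : Type*} [MeasurableSpace X] (μ : Measure X) [IsProbabilityMeasure μ]
    (u : X → ℝ) (hu : Integrable u μ) (hpos : ∀ x, 0 ≤ u x) (n : ℕ) :
    Measure.pi (fun _ : Fin n => μ.withDensity (fun x => ENNReal.ofReal (u x))) =
      (Measure.pi (fun _ : Fin n => μ)).withDensity
        (fun x => ENNReal.ofReal (∏ i, u (x i))) := by
  have : IsFiniteMeasure (μ.withDensity (fun x => ENNReal.ofReal (u x))) :=
    isFiniteMeasure_withDensity_ofReal hu.2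
  refine Measure.pi_eq fun s hs => ?_
  rw [withDensity_apply _ (MeasurableSet.univ_pi hs), Measure.restrict_pi_pi,
    ← ofReal_integral_eq_lintegral_ofReal, integral_fintype_prod_eq_prod (fun _ => u),
    ENNReal.ofReal_prod_of_nonneg]
  · refine Finset.prod_congr rfl fun i _ => ?_
    rw [withDensity_apply _ (hs i), ofReal_integral_eq_lintegral_ofReal hu.integrableOn]
    exact Filter.Eventually.of_forall hpos
  · intro i _
    exact integral_nonneg hpos
  · exact Integrable.fintype_prod (f := fun _ => u) fun i => hu.integrableOn
  · exact Filter.Eventually.of_forall fun x => Finset.prod_nonneg fun i _ => hpos _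

lemma relEntropy_aux_s10 {X : Type*} [MeasurableSpace X] (μ : Measure X) [IsProbabilityMeasure μ]
    (u : X → ℝ) (hum : Measurable u) (hlo : ∀ x, 1 / 2 ≤ u x) (hhi : ∀ x, u x ≤ 2) 
    [IsProbabilityMeasure (μ.withDensity (fun x => ENNReal.ofReal (u x)))] (n : ℕ) :
    relEntropy (Measure.pi (fun _ : Fin n => μ.withDensity (fun x => ENNReal.ofReal (u x))))
      (Measure.pi (fun _ : Fin n => μ)) ≤
      ENNReal.ofReal (n * ∫ x, u x * (u x - 1) ∂μ) := by
  set ν := μ.withDensity (fun x => ENNReal.ofReal (u x)) with hν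
  have hpos : ∀ x, 0 ≤ u x := fun x => by linarith [hlo x]
  have hui : Integrable u μ := Integrable.of_bound hum.aestronglyMeasurable 2
    (Filter.Eventually.of_forall fun x => by rw [Real.norm_of_nonneg (hpos x)]; exact hhi x)
  have hpi := pi_withDensity_aux μ u hui hpos n
  rw [← hν] at hpi
  have hac : Measure.pi (fun _ : Fin n => ν) ≪ Measure.pi (fun _ : Fin n => μ) := by
    rw [hpi]; exact withDensity_absolutelyContinuous _ _
  have hrn : (Measure.pi (fun _ : Fin n => ν)).rnDeriv (Measure.pi (fun _ : Fin n => μ))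
      =ᵐ[Measure.pi (fun _ : Fin n => ν)] fun x => ENNReal.ofReal (∏ i, u (x i)) := by
    apply hac.ae_le
    conv in (Measure.pi (fun _ : Fin n => ν)).rnDeriv _ => rw [hpi]
    apply Measure.rnDeriv_withDensity
    fun_prop
  have hlog : (fun x => Real.log ((Measure.pi (fun _ : Fin n => ν)).rnDeriv
      (Measure.pi (fun _ : Fin n => μ)) x).toReal)
      =ᵐ[Measure.pi (fun _ : Fin n => ν)] fun x => ∑ i, Real.log (u (x i)) := by
    filter_upwards [hrn] with x hx
    rw [hx, ENNReal.toReal_ofReal (Finset.prod_nonneg fun i _ => hpos _), Real.log_prod]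
    intro i _
    linarith [hlo (x i)]
  have hli : Integrable (fun x => Real.log (u x)) ν := by
    refine Integrable.of_bound hum.log.aestronglyMeasurable 1 (Filter.Eventually.of_forall fun x => ?_)
    have h0 : 0 < u x := by linarith [hlo x]
    rw [Real.norm_eq_abs, abs_le]
    constructor
    · have := Real.one_sub_inv_le_log_of_pos h0
      have h2 : (u x)⁻¹ ≤ 2 := by
        rw [inv_le_comm₀ h0 (by norm_num)]; linarith [hlo x]
      linarith
    · have := Real.log_le_sub_one_of_pos h0
      linarith [hhi x]
  have hsi : Integrable (fun x : Fin n → X => ∑ i, Real.log (u (x i)))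
      (Measure.pi (fun _ : Fin n => ν)) :=
    integrable_finsetSum _ fun i _ => integrable_comp_eval (μ := fun _ => ν) hli
  unfold relEntropy
  rw [if_pos ⟨hac, hsi.congr hlog.symm⟩]
  apply ENNReal.ofReal_le_ofReal
  rw [integral_congr_ae hlog, integral_finsetSum _ 
    fun i _ => integrable_comp_eval (μ := fun _ => ν) hli]
  have : ∀ i : Fin n, ∫ x, Real.log (u (x i)) ∂(Measure.pi (fun _ : Fin n => ν)) 
      = ∫ x, Real.log (u x) ∂ν := fun i => 
    integral_comp_eval (μ := fun _ => ν) (f := fun x => Real.log (u x)) hli.1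
  rw [Finset.sum_congr rfl fun i _ => this i]
  rw [Finset.sum_const, Finset.card_univ, Fintype.card_fin, nsmul_eq_mul]
  gcongr
  have hli' := hli
  rw [hν, integrable_withDensity_iff_integrable_smul' (by fun_prop) (by simp)] at hli'
  rw [hν, integral_withDensity_eq_integral_toReal_smul (by fun_prop) (by simp)]
  refine integral_mono hli' ?_ fun x => ?_
  · refine Integrable.of_bound (by fun_prop) 2 (Filter.Eventually.of_forall fun x => ?_)
    rw [Real.norm_eq_abs, abs_mul, abs_of_nonneg (hpos x)]
    have : |u x - 1| ≤ 1 := by rw [abs_le]; constructor <;> linarith [hlo x, hhi x]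
    nlinarith [hhi x, hpos x, abs_nonneg (u x - 1)]
  · simp only [ENNReal.toReal_ofReal (hpos x), smul_eq_mul]
    exact mul_le_mul_of_nonneg_left 
      (Real.log_le_sub_one_of_pos (by linarith [hlo x])) (hpos x)

lemma ofReal_integral_le_lintegral_aux {Y : Type*} [MeasurableSpace Y] (π : Measure Y)
    (g : Y → ℝ) (hg : Integrable g π) :
    ENNReal.ofReal (∫ y, g y ∂π) ≤ ∫⁻ y, ENNReal.ofReal (g y) ∂π := by
  rw [integral_eq_lintegral_pos_part_sub_lintegral_neg_part hg]
  refine (ENNReal.ofReal_le_ofReal (sub_le_self _ ENNReal.toReal_nonneg)).trans ?_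
  exact ENNReal.ofReal_toReal_le

lemma cost_lower_aux {X : Type*} [MetricSpace X] [MeasurableSpace X]
    (μ ν : Measure X) [IsProbabilityMeasure μ] [IsProbabilityMeasure ν]
    (f : X → ℝ) (hfm : Measurable f) (hf0 : ∀ x, 0 ≤ f x) (hf1 : ∀ x, f x ≤ 1)
    (hfl : ∀ x y, f y - f x ≤ dist x y) (n : ℕ) :
    ENNReal.ofReal (n * (∫ x, f x ∂ν - ∫ x, f x ∂μ)) ≤
      optTransportCost (fun x y => ∑ i, dist (x i) (y i))
            (Measure.pi fun _ : Fin n => μ) (Measure.pi fun _ : Fin n => ν) := by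
  have hb : ∀ x, ‖f x‖ ≤ 1 := fun x => by rw [Real.norm_of_nonneg (hf0 x)]; exact hf1 x
  unfold optTransportCost
  refine le_iInf₂ fun π hπ => ?_
  obtain ⟨h1, h2⟩ := hπ
  have hint : ∀ (ρ : Measure X) [IsProbabilityMeasure ρ], Integrable f ρ := fun ρ _ => 
    Integrable.of_bound hfm.aestronglyMeasurable 1 (Filter.Eventually.of_forall hb)
  let F : (Fin n → X) → ℝ := fun x => ∑ i, f (x i)
  have hFm : Measurable F := by fun_prop
  have hFi : ∀ (ρ : Measure X) [IsProbabilityMeasure ρ], Integrable F (Measure.pi fun _ => ρ) := 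
    fun ρ _ => integrable_finsetSum _ fun i _ => integrable_comp_eval (μ := fun _ => ρ) (hint ρ)
  have hFv : ∀ (ρ : Measure X) [IsProbabilityMeasure ρ], 
      ∫ x, F x ∂(Measure.pi fun _ => ρ) = n * ∫ x, f x ∂ρ := by
    intro ρ _
    rw [integral_finsetSum _ fun i _ => integrable_comp_eval (μ := fun _ => ρ) (hint ρ)]
    rw [Finset.sum_congr rfl fun i _ => 
      integral_comp_eval (μ := fun _ : Fin n => ρ) (i := i) (f := f) (hint ρ).1]
    simp
  have e1 : ∫ p, F p.1 ∂π = n * ∫ x, f x ∂μ := by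
    rw [← hFv, ← h1, integral_map measurable_fst.aemeasurable hFm.aestronglyMeasurable]
  have e2 : ∫ p, F p.2 ∂π = n * ∫ x, f x ∂ν := by
    rw [← hFv, ← h2, integral_map measurable_snd.aemeasurable hFm.aestronglyMeasurable]
  have i1 : Integrable (fun p => F p.1) π := by
    have := hFi μ
    rw [← h1] at this
    exact this.comp_measurable measurable_fst
  have i2 : Integrable (fun p => F p.2) π := by
    have := hFi ν
    rw [← h2] at this
    exact this.comp_measurable measurable_snd
  rw [mul_sub, ← e1, ← e2, ← integral_sub i2 i1]
  refine (ofReal_integral_le_lintegral_aux _ _ (i2.sub i1)).trans (lintegral_mono fun p => ?_)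
  apply ENNReal.ofReal_le_ofReal
  change ∑ i, f (p.2 i) - ∑ i, f (p.1 i) ≤ ∑ i, dist (p.1 i) (p.2 i)
  rw [← Finset.sum_sub_distrib]
  exact Finset.sum_le_sum fun i _ => hfl _ _


lemma exists_test_aux {X : Type*} [MetricSpace X] [PolishSpace X] [MeasurableSpace X]
    [BorelSpace X] (μ : Measure X) [IsProbabilityMeasure μ]
    (hne : ¬ ∃ x₀ : X, μ = Measure.dirac x₀) :
    ∃ f : X → ℝ, Measurable f ∧ (∀ x, 0 ≤ f x) ∧ (∀ x, f x ≤ 1) ∧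
      (∀ x y, f y - f x ≤ dist x y) ∧ ∀ m : ℝ, ¬ ∀ᵐ x ∂μ, f x = m := by
  obtain ⟨x₀, hx₀⟩ := Measure.nonempty_support (IsProbabilityMeasure.ne_zero μ)
  refine ⟨fun x => min 1 (dist x x₀), by fun_prop, fun x => by positivity,
    fun x => min_le_left _ _, fun x y => ?_, fun m hm => ?_⟩
  · have h1 := dist_triangle y x x₀
    rw [dist_comm y x] at h1
    have h0 : 0 ≤ dist x y := dist_nonneg
    simp only
    rcases le_total 1 (dist x x₀) with h | h
    · rw [min_eq_left h]; linarith [min_le_left 1 (dist y x₀)]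
    · rw [min_eq_right h]; linarith [min_le_right 1 (dist y x₀)]
  · rw [Measure.mem_support_iff_forall] at hx₀
    have hm0 : m ≤ 0 := by
      by_contra hpos
      push Not at hpos
      have hb := hx₀ _ (Metric.ball_mem_nhds x₀ hpos)
      refine hb.ne' ?_
      refine measure_mono_null (fun x hx => ?_) hm
      simp only [Set.mem_compl_iff, Set.mem_ofPred_eq]
      intro h
      have : dist x x₀ < m := hx
      linarith [min_le_right 1 (dist x x₀)]
    apply hne
    refine ⟨x₀, eq_dirac_of_ae_aux μ x₀ ?_⟩
    filter_upwards [hm] with x hx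
    have h2 : min 1 (dist x x₀) ≤ 0 := hx.trans_le hm0
    rcases min_le_iff.1 h2 with h | h
    · linarith
    · exact dist_le_zero.1 h

lemma large_aux {X : Type*} [MetricSpace X] [PolishSpace X] [MeasurableSpace X]
    [BorelSpace X] (μ : Measure X) [IsProbabilityMeasure μ]
    (hne : ¬ ∃ x₀ : X, μ = Measure.dirac x₀) :
    ∃ V : ℝ, 0 < V ∧ ∀ N : ℕ, 1 ≤ N → ∃ ζ : Measure (Fin (N ^ 2) → X), IsProbabilityMeasure ζ ∧
      ENNReal.ofReal (N * V) ≤ optTransportCost (fun x y => ∑ i, dist (x i) (y i))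
            (Measure.pi fun _ => μ) ζ ∧
      relEntropy ζ (Measure.pi fun _ => μ) ≤ 1 := by
  obtain ⟨f, hfm, hf0, hf1, hfl, hfc⟩ := exists_test_aux μ hne
  have hfi : Integrable f μ := Integrable.of_bound hfm.aestronglyMeasurable 1
    (Filter.Eventually.of_forall fun x => by rw [Real.norm_of_nonneg (hf0 x)]; exact hf1 x)
  set m := ∫ x, f x ∂μ with hm
  have hm0 : 0 ≤ m := integral_nonneg hf0
  have hm1 : m ≤ 1 := by
    have := integral_mono hfi (integrable_const (1 : ℝ)) hf1
    simpa using this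
  set g : X → ℝ := fun x => f x - m with hg
  have hgm : Measurable g := by fun_prop
  have hgb : ∀ x, |g x| ≤ 1 := fun x => by
    rw [abs_le]; constructor <;> simp only [hg] <;> linarith [hf0 x, hf1 x]
  have hgi : Integrable g μ := hfi.sub (integrable_const _)
  have hg0 : ∫ x, g x ∂μ = 0 := by
    simp only [hg]
    rw [integral_sub hfi (integrable_const _)]; simp [hm]
  have hg2b : ∀ x, g x ^ 2 ≤ 1 := fun x => (sq_le_one_iff_abs_le_one _).2 (hgb x)
  have hg2i : Integrable (fun x => g x ^ 2) μ :=
    Integrable.of_bound (by fun_prop) 1 (Filter.Eventually.of_forall fun x => by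
      rw [Real.norm_of_nonneg (sq_nonneg _)]; exact hg2b x)
  set W := ∫ x, g x ^ 2 ∂μ with hW
  have hW0 : 0 ≤ W := integral_nonneg fun x => sq_nonneg _
  have hW1 : W ≤ 1 := by
    have := integral_mono hg2i (integrable_const (1 : ℝ)) hg2b
    simpa using this
  have hWpos : 0 < W := by
    refine lt_of_le_of_ne hW0 fun h => hfc m ?_
    have := (integral_eq_zero_iff_of_nonneg (fun x => sq_nonneg (g x)) hg2i).1 h.symm
    filter_upwards [this] with x hx
    have : g x ^ 2 = 0 := hx
    have := pow_eq_zero_iff (two_ne_zero) |>.1 this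
    simp only [hg] at this
    linarith
  refine ⟨W / 2, by positivity, fun N hN => ?_⟩
  have hNR : (1 : ℝ) ≤ N := by exact_mod_cast hN
  set ε : ℝ := 1 / (2 * N) with hε
  have hε0 : 0 < ε := by positivity
  have hε1 : ε ≤ 1 / 2 := by
    rw [hε]; exact one_div_le_one_div_of_le (by norm_num) (by linarith)
  set u : X → ℝ := fun x => 1 + ε * g x with hu
  have hum : Measurable u := by fun_prop
  have hεg : ∀ x, |ε * g x| ≤ 1 / 2 := fun x => by
    rw [abs_mul, abs_of_pos hε0]
    nlinarith [hgb x, abs_nonneg (g x)]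
  have hlo : ∀ x, 1 / 2 ≤ u x := fun x => by
    have := (abs_le.1 (hεg x)).1
    simp only [hu]; linarith
  have hhi : ∀ x, u x ≤ 2 := fun x => by
    have := (abs_le.1 (hεg x)).2
    simp only [hu]; linarith
  have hpos : ∀ x, 0 ≤ u x := fun x => by linarith [hlo x]
  have hui : Integrable u μ := (integrable_const _).add (hgi.const_mul _)
  have hu1 : ∫ x, u x ∂μ = 1 := by
    simp only [hu]
    rw [integral_add (integrable_const _) (hgi.const_mul _), integral_const_mul, hg0]
    simp
  have hprob : IsProbabilityMeasure (μ.withDensity (fun x => ENNReal.ofReal (u x))) := by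
    constructor
    rw [withDensity_apply _ MeasurableSet.univ, Measure.restrict_univ,
      ← ofReal_integral_eq_lintegral_ofReal hui (Filter.Eventually.of_forall hpos), hu1]
    simp
  refine ⟨Measure.pi fun _ => μ.withDensity (fun x => ENNReal.ofReal (u x)), inferInstance,
    ?_, ?_⟩
  · refine le_trans (le_of_eq ?_) (cost_lower_aux μ _ f hfm hf0 hf1 hfl (N ^ 2))
    congr 1
    rw [integral_withDensity_eq_integral_toReal_smul (by fun_prop) (by simp)]
    have : ∀ x, (ENNReal.ofReal (u x)).toReal • f x
        = (f x + (ε * m) * g x) + ε * g x ^ 2 := fun x => by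
      rw [ENNReal.toReal_ofReal (hpos x), smul_eq_mul]
      simp only [hu, hg]; ring
    simp_rw [this]
    have hi1 : Integrable (fun x => f x + (ε * m) * g x) μ := hfi.add (hgi.const_mul _)
    rw [integral_add hi1 (hg2i.const_mul _),
      integral_add hfi (hgi.const_mul _), integral_const_mul, integral_const_mul, hg0, ← hW,
      ← hm, hε]
    push_cast
    field_simp
    ring
  · refine (relEntropy_aux_s10 μ u hum hlo hhi (N ^ 2)).trans ?_
    rw [← ENNReal.ofReal_one]
    apply ENNReal.ofReal_le_ofReal
    have : ∀ x, u x * (u x - 1) = ε * g x + ε ^ 2 * g x ^ 2 := fun x => by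
      simp only [hu]; ring
    simp_rw [this]
    rw [integral_add (hgi.const_mul _) (hg2i.const_mul _), integral_const_mul,
      integral_const_mul, hg0, ← hW, hε]
    push_cast
    have : (N : ℝ) ^ 2 * (1 / (2 * (N : ℝ)) * 0 + (1 / (2 * (N : ℝ))) ^ 2 * W) = W / 4 := by
      field_simp
      ring
    rw [this]
    linarith

/-- A convex `T₁` transportation cost inequality has the dimension-free tensorization
property if and only if `α ≡ 0` or `μ` is a Dirac mass. -/
theorem dimension_free_T1_iff_trivial
    {X : Type*} [MetricSpace X] [PolishSpace X] [MeasurableSpace X] [BorelSpace X]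
    (μ : Measure X) [IsProbabilityMeasure μ]
    (α : ℝ≥0∞ → ℝ≥0∞) (hα : ClassCFun α) :
    ((∀ ν : Measure X, IsProbabilityMeasure ν →
        α (optTransportCost (fun x y => dist x y) μ ν) ≤ relEntropy ν μ) ∧
      ∀ n : ℕ, 1 ≤ n → ∀ ζ : Measure (Fin n → X), IsProbabilityMeasure ζ →
        α (optTransportCost (fun x y => ∑ i, dist (x i) (y i))
            (Measure.pi fun _ => μ) ζ) ≤
          relEntropy ζ (Measure.pi fun _ => μ)) ↔
      (∀ t : ℝ≥0∞, α t = 0) ∨ ∃ x₀ : X, μ = Measure.dirac x₀ := by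
  constructor
  · rintro ⟨-, h⟩
    by_cases hne : ∃ x₀ : X, μ = Measure.dirac x₀
    · exact Or.inr hne
    left
    obtain ⟨V, hV, hN⟩ := large_aux μ hne
    refine alpha_zero_aux α hα fun K => ?_
    obtain ⟨k, hk⟩ := exists_nat_ge (K / V)
    obtain ⟨ζ, hζ, h1, h2⟩ := hN (k + 1) (by omega)
    refine ⟨((k + 1 : ℕ) : ℝ) * V, ?_, ?_⟩
    · rw [div_le_iff₀ hV] at hk
      push_cast
      nlinarith
    · exact (hα.1 h1).trans ((h _ (Nat.one_le_pow _ _ (by omega)) ζ hζ).trans h2)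
  · rintro (h | ⟨x₀, rfl⟩)
    · simp [h]
    · refine ⟨fun ν hν => dirac_case_aux _ x₀ (dist_self _) α hα.2.1 ν, fun n _ ζ hζ => ?_⟩
      rw [pi_dirac_aux]
      exact dirac_case_aux _ _ (by simp) α hα.2.1 ζ

end
end
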